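/- arXiv:2506.23970 — 2 statements merged into one kernel-verified Lean document; each statement's English description precedes it below -/
import Mathlib

section
/- Fix ε > 0 and an integer d ≥ 3, and let s = s(n) be the least integer satisfying (d-1)^{s-3} ≥ (16+ε)·d·n·log n. Let m = m(n) be any sequence with 0 ≤ m(n) ≤ (log n)². Let H be the graph obtained from the d-regular graph underlying G''(n,d) (n even) by deleting a uniformly random set of m(n) of its edges. Then, with probability 1 - o((log n)^{-2}) as n → ∞ through even integers, H is connected and has diameter at most s(n). -/
open Filter Asymptotics

/-- `M` is an ordered `d`-tuple of pairwise edge-disjoint perfect matchings of `K_n`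
(each matching being viewed as a 1-regular simple graph on `[n]`). -/
def IsPMTuple {n d : ℕ} (M : Fin d → SimpleGraph (Fin n)) : Prop :=
  (∀ i, ∀ v, Nat.card ((M i).neighborSet v) = 1) ∧
  ∀ i j, i ≠ j → Disjoint (M i) (M j)

open Classical in
/-- Probability that `G''(n,d)`, the uniformly random ordered `d`-tuple of pairwise
edge-disjoint perfect matchings of `K_n`, satisfies the property `A`. -/
noncomputable def tupleProb (n d : ℕ) (A : (Fin d → SimpleGraph (Fin n)) → Prop) : ℝ :=
  ((Finset.univ.filter (fun M : Fin d → SimpleGraph (Fin n) =>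
      IsPMTuple M ∧ A M)).card : ℝ) /
  ((Finset.univ.filter (fun M : Fin d → SimpleGraph (Fin n) => IsPMTuple M)).card : ℝ)

open Classical in
/-- Probability of the event `A` for the pair consisting of the uniformly random tuple
`G''(n,d)` together with a uniformly random set of `m` edges of its union graph (the
deleted edges); since every such union graph has exactly `nd/2` edges, the uniform
distribution on such pairs agrees with first sampling `G''(n,d)` and then a uniformly
random `m`-subset of its edges. -/
noncomputable def delProb (n d m : ℕ)
    (A : (Fin d → SimpleGraph (Fin n)) → Finset (Sym2 (Fin n)) → Prop) : ℝ :=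
  ((Finset.univ.filter
      (fun P : (Fin d → SimpleGraph (Fin n)) × Finset (Sym2 (Fin n)) =>
        IsPMTuple P.1 ∧ (∀ e ∈ P.2, e ∈ (⨆ i, P.1 i).edgeSet) ∧ P.2.card = m ∧
          A P.1 P.2)).card : ℝ) /
  ((Finset.univ.filter
      (fun P : (Fin d → SimpleGraph (Fin n)) × Finset (Sym2 (Fin n)) =>
        IsPMTuple P.1 ∧ (∀ e ∈ P.2, e ∈ (⨆ i, P.1 i).edgeSet) ∧ P.2.card = m)).card : ℝ)

open Filter Asymptotics

namespace RD

abbrev Cfg (n d : ℕ) := Fin d → Fin n → Fin n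

def IsCfg {n d : ℕ} (ω : Cfg n d) : Prop := ∀ i x, ω i (ω i x) = x ∧ ω i x ≠ x

open Classical in
/-- configurations agreeing with `ω0` on the half-edges in `D` -/
noncomputable def cyl {n d : ℕ} (D : Finset (Fin n × Fin d)) (ω0 : Cfg n d) :
    Finset (Cfg n d) :=
  Finset.univ.filter fun ω => IsCfg ω ∧ ∀ p ∈ D, ω p.2 p.1 = ω0 p.2 p.1

open Classical in
/-- conditional probability of `Fail` on the cylinder is at most `q` -/
def PF {n d : ℕ} (Fail : Cfg n d → Prop) (D : Finset (Fin n × Fin d)) (ω0 : Cfg n d)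
    (q : ℝ) : Prop :=
  (((cyl D ω0).filter Fail).card : ℝ) ≤ q * ((cyl D ω0).card : ℝ)

def Closed {n d : ℕ} (D : Finset (Fin n × Fin d)) (ω0 : Cfg n d) : Prop :=
  ∀ p ∈ D, (ω0 p.2 p.1, p.2) ∈ D

/-- add the edge of colour `i` at `x` to the exposed set -/
def ext {n d : ℕ} (D : Finset (Fin n × Fin d)) (ω : Cfg n d) (x : Fin n) (i : Fin d) :
    Finset (Fin n × Fin d) := insert (x, i) (insert (ω i x, i) D)

variable {n d : ℕ}

lemma mem_cyl {D : Finset (Fin n × Fin d)} {ω0 ω : Cfg n d} :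
    ω ∈ cyl D ω0 ↔ IsCfg ω ∧ ∀ p ∈ D, ω p.2 p.1 = ω0 p.2 p.1 := by
  simp [cyl]

lemma mem_ext {D : Finset (Fin n × Fin d)} {ω : Cfg n d} {x : Fin n} {i : Fin d}
    {p : Fin n × Fin d} : p ∈ ext D ω x i ↔ p = (x, i) ∨ p = (ω i x, i) ∨ p ∈ D := by
  simp [ext]

lemma PF.mono {Fail : Cfg n d → Prop} {D : Finset (Fin n × Fin d)} {ω0 : Cfg n d} {q q' : ℝ}
    (h : PF Fail D ω0 q) (hq : q ≤ q') : PF Fail D ω0 q' := by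
  unfold PF at *
  refine h.trans ?_
  gcongr

lemma PF_one {Fail : Cfg n d → Prop} {D : Finset (Fin n × Fin d)} {ω0 : Cfg n d} :
    PF Fail D ω0 1 := by
  classical
  unfold PF
  rw [one_mul]
  exact_mod_cast Finset.card_filter_le _ _

lemma PF_zero {Fail : Cfg n d → Prop} {D : Finset (Fin n × Fin d)} {ω0 : Cfg n d}
    (h : ∀ ω ∈ cyl D ω0, ¬ Fail ω) : PF Fail D ω0 0 := by
  classical
  unfold PF
  rw [Finset.filter_false_of_mem h]
  simp

lemma self_mem_cyl {D : Finset (Fin n × Fin d)} {ω0 : Cfg n d} (h : IsCfg ω0) :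
    ω0 ∈ cyl D ω0 := mem_cyl.2 ⟨h, fun _ _ => rfl⟩

lemma cyl_sub {D D' : Finset (Fin n × Fin d)} {ω0 ω : Cfg n d} (h : ω ∈ cyl D ω0)
    (hD : D ⊆ D') : cyl D' ω ⊆ cyl D ω0 := by
  intro ω' h'
  rw [mem_cyl] at *
  exact ⟨h'.1, fun p hp => (h'.2 p (hD hp)).trans (h.2 p hp)⟩

lemma sub_ext {D : Finset (Fin n × Fin d)} {ω : Cfg n d} {x : Fin n} {i : Fin d} :
    D ⊆ ext D ω x i := fun p hp => mem_ext.2 (Or.inr (Or.inr hp))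

lemma closed_of_mem {D : Finset (Fin n × Fin d)} {ω0 ω : Cfg n d} (h : Closed D ω0)
    (hω : ω ∈ cyl D ω0) : Closed D ω := by
  intro p hp
  rw [(mem_cyl.1 hω).2 p hp]
  exact h p hp

lemma closed_ext {D : Finset (Fin n × Fin d)} {ω : Cfg n d} (hω : IsCfg ω)
    (h : Closed D ω) (x : Fin n) (i : Fin d) : Closed (ext D ω x i) ω := by
  intro p hp
  rw [mem_ext] at *
  rcases hp with rfl | rfl | hp
  · simp
  · left
    simp [(hω i x).1]
  · right; right; exact h p hp

/-- conjugate colour `i` by the transposition of `a` and `b` -/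
def sw (ω : Cfg n d) (i : Fin d) (a b : Fin n) : Cfg n d :=
  Function.update ω i (fun x => Equiv.swap a b (ω i (Equiv.swap a b x)))

lemma sw_same (ω : Cfg n d) (i : Fin d) (a b x : Fin n) :
    sw ω i a b i x = Equiv.swap a b (ω i (Equiv.swap a b x)) := by
  simp [sw]

lemma sw_ne (ω : Cfg n d) {i j : Fin d} (h : j ≠ i) (a b x : Fin n) :
    sw ω i a b j x = ω j x := by
  simp [sw, h]

lemma sw_sw (ω : Cfg n d) (i : Fin d) (a b : Fin n) : sw (sw ω i a b) i a b = ω := by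
  funext j x
  by_cases h : j = i
  · subst h; simp [sw_same]
  · simp [sw_ne _ h]

lemma isCfg_sw {ω : Cfg n d} (h : IsCfg ω) (i : Fin d) (a b : Fin n) : IsCfg (sw ω i a b) := by
  intro j x
  by_cases hj : j = i
  · subst hj
    simp only [sw_same, Equiv.swap_apply_self, (h j _).1, true_and]
    intro hh
    have := congrArg (Equiv.swap a b) hh
    simp only [Equiv.swap_apply_self] at this
    exact (h j _).2 this
  · simpa [sw_ne _ hj] using h j x

lemma free_of_mem {D : Finset (Fin n × Fin d)} {ω0 ω : Cfg n d} (hc : Closed D ω0)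
    (h : ω ∈ cyl D ω0) {x : Fin n} {i : Fin d} (hx : (x, i) ∉ D) : (ω i x, i) ∉ D := by
  intro hh
  have h1 := closed_of_mem hc h _ hh
  simp only [((mem_cyl.1 h).1 i x).1] at h1
  exact hx h1

/-- candidates for the partner of `x` in colour `i` -/
def fre (D : Finset (Fin n × Fin d)) (x : Fin n) (i : Fin d) : Finset (Fin n) :=
  Finset.univ.filter fun y => y ≠ x ∧ (y, i) ∉ D

lemma class_card {D : Finset (Fin n × Fin d)} {ω0 : Cfg n d} (hc : Closed D ω0)
    {x : Fin n} {i : Fin d} (hx : (x, i) ∉ D) {y z : Fin n} (hy : y ∈ fre D x i)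
    (hz : z ∈ fre D x i) :
    ((cyl D ω0).filter (fun ω => ω i x = y)).card =
      ((cyl D ω0).filter (fun ω => ω i x = z)).card := by
  simp only [fre, Finset.mem_filter, Finset.mem_univ, true_and] at hy hz
  have key : ∀ ω ∈ cyl D ω0, sw ω i y z ∈ cyl D ω0 := by
    intro ω hω
    have hω' := mem_cyl.1 hω
    rw [mem_cyl]
    refine ⟨isCfg_sw hω'.1 _ _ _, ?_⟩
    rintro ⟨p, j⟩ hp
    by_cases hj : j = i
    · subst hj
      have h1 : p ≠ y := fun h => hy.2 (h ▸ hp)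
      have h2 : p ≠ z := fun h => hz.2 (h ▸ hp)
      have h3 := hc _ hp
      have h4 := hω'.2 _ hp
      simp only at h3 h4
      rw [← h4] at h3 ⊢
      rw [sw_same, Equiv.swap_apply_of_ne_of_ne h1 h2, Equiv.swap_apply_of_ne_of_ne]
      · intro h; exact hy.2 (h ▸ h3)
      · intro h; exact hz.2 (h ▸ h3)
    · simp only [sw_ne _ hj]
      exact hω'.2 _ hp
  have hxs : Equiv.swap y z x = x := Equiv.swap_apply_of_ne_of_ne hy.1.symm hz.1.symm
  refine Finset.card_bij' (fun ω _ => sw ω i y z) (fun ω _ => sw ω i y z) ?_ ?_ ?_ ?_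
  · intro ω hω
    rw [Finset.mem_filter] at hω ⊢
    refine ⟨key _ hω.1, ?_⟩
    rw [sw_same, hxs, hω.2, Equiv.swap_apply_left]
  · intro ω hω
    rw [Finset.mem_filter] at hω ⊢
    refine ⟨key _ hω.1, ?_⟩
    rw [sw_same, hxs, hω.2, Equiv.swap_apply_right]
  · intro ω _; exact sw_sw _ _ _ _
  · intro ω _; exact sw_sw _ _ _ _

lemma class_eq {D : Finset (Fin n × Fin d)} {ω0 ω : Cfg n d}
    {x : Fin n} {i : Fin d} (hω : ω ∈ cyl D ω0) :
    (cyl D ω0).filter (fun ω' => ω' i x = ω i x) = cyl (ext D ω x i) ω := by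
  ext ω'
  have h0 := mem_cyl.1 hω
  rw [Finset.mem_filter, mem_cyl, mem_cyl]
  constructor
  · rintro ⟨⟨h1, h2⟩, h3⟩
    refine ⟨h1, fun p hp => ?_⟩
    rcases mem_ext.1 hp with rfl | rfl | hp
    · exact h3
    · simp only
      rw [(h0.1 i x).1, ← h3, (h1 i x).1]
    · rw [h2 p hp, h0.2 p hp]
  · rintro ⟨h1, h2⟩
    refine ⟨⟨h1, fun p hp => ?_⟩, ?_⟩
    · rw [h2 p (sub_ext hp), h0.2 p hp]
    · exact h2 (x, i) (mem_ext.2 (Or.inl rfl))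

/-- exposing one edge -/
lemma step {Fail : Cfg n d → Prop} {D : Finset (Fin n × Fin d)} {ω0 : Cfg n d}
    (hc : Closed D ω0) {x : Fin n} {i : Fin d} (hx : (x, i) ∉ D) (Bd : Finset (Fin n))
    (p f0 f1 : ℝ) (h01 : f0 ≤ f1)
    (hp : ((fre D x i ∩ Bd).card : ℝ) ≤ p * ((fre D x i).card : ℝ))
    (h0 : ∀ ω ∈ cyl D ω0, ω i x ∉ Bd → PF Fail (ext D ω x i) ω f0)
    (h1 : ∀ ω ∈ cyl D ω0, ω i x ∈ Bd → PF Fail (ext D ω x i) ω f1) :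
    PF Fail D ω0 (f0 + p * (f1 - f0)) := by
  classical
  by_cases hne : (fre D x i).Nonempty
  swap
  · have : cyl D ω0 = ∅ := by
      rw [Finset.eq_empty_iff_forall_notMem]
      intro ω hω
      apply hne
      refine ⟨ω i x, ?_⟩
      simp only [fre, Finset.mem_filter, Finset.mem_univ, true_and]
      exact ⟨((mem_cyl.1 hω).1 i x).2, free_of_mem hc hω hx⟩
    unfold PF
    simp [this]
  obtain ⟨z, hz⟩ := hne
  set c : ℝ := (((cyl D ω0).filter (fun ω => ω i x = z)).card : ℝ) with hcdef
  have hmaps : ∀ ω ∈ cyl D ω0, ω i x ∈ fre D x i := by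
    intro ω hω
    simp only [fre, Finset.mem_filter, Finset.mem_univ, true_and]
    exact ⟨((mem_cyl.1 hω).1 i x).2, free_of_mem hc hω hx⟩
  have hcard : ((cyl D ω0).card : ℝ) = (fre D x i).card * c := by
    rw [Finset.card_eq_sum_card_fiberwise (s := cyl D ω0)
      (f := fun ω : Cfg n d => ω i x) (t := fre D x i) (fun ω hω => hmaps ω hω)]
    push_cast
    rw [Finset.sum_congr rfl (g := fun _ => c)]
    · simp
    · intro y hy
      rw [hcdef, class_card hc hx hy hz]
  have hfail : (((cyl D ω0).filter Fail).card : ℝ) ≤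
      ∑ y ∈ fre D x i, (if y ∈ Bd then f1 else f0) * c := by
    rw [Finset.card_eq_sum_card_fiberwise (s := (cyl D ω0).filter Fail)
      (f := fun ω : Cfg n d => ω i x) (t := fre D x i)
      (fun ω hω => hmaps ω (Finset.mem_filter.1 hω).1)]
    push_cast
    apply Finset.sum_le_sum
    intro y hy
    have hcy : c = (((cyl D ω0).filter (fun ω => ω i x = y)).card : ℝ) := by
      rw [hcdef, class_card hc hx hy hz]
    rw [Finset.filter_filter]
    by_cases hcl : ((cyl D ω0).filter (fun ω => ω i x = y)).Nonempty
    · obtain ⟨ω, hω⟩ := hcl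
      rw [Finset.mem_filter] at hω
      obtain ⟨hω, rfl⟩ := hω
      have e := class_eq (x := x) (i := i) hω
      have e2 : (cyl D ω0).filter (fun a => Fail a ∧ a i x = ω i x) =
          (cyl (ext D ω x i) ω).filter Fail := by
        rw [← e, Finset.filter_filter]
        congr 1
        ext a
        exact and_comm
      rw [e2, hcy, e]
      split_ifs with hb
      · have := h1 ω hω hb
        unfold PF at this
        convert this
      · have := h0 ω hω hb
        unfold PF at this
        convert this
    · have hc0 : c = 0 := by
        rw [hcy]
        rw [Finset.not_nonempty_iff_eq_empty] at hcl
        simp [hcl]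
      rw [hc0, mul_zero]
      rw [Finset.not_nonempty_iff_eq_empty] at hcl
      have : (cyl D ω0).filter (fun a => Fail a ∧ a i x = y) = ∅ := by
        rw [← Finset.subset_empty, ← hcl]
        intro a ha
        rw [Finset.mem_filter] at ha ⊢
        exact ⟨ha.1, ha.2.2⟩
      simp [this]
  have hc0 : 0 ≤ c := by positivity
  have hsum : ∑ y ∈ fre D x i, (if y ∈ Bd then f1 else f0) * c =
      (f0 * (fre D x i).card + (f1 - f0) * (fre D x i ∩ Bd).card) * c := by
    rw [← Finset.sum_mul]
    congr 1
    have : ∀ y, (if y ∈ Bd then f1 else f0) = f0 + (if y ∈ Bd then (f1 - f0) else 0) := by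
      intro y; split_ifs <;> ring
    simp_rw [this]
    rw [Finset.sum_add_distrib, Finset.sum_const, ← Finset.sum_filter, Finset.sum_const,
      Finset.filter_mem_eq_inter]
    simp; ring
  unfold PF
  rw [hcard]
  have h3 : (f1 - f0) * ((fre D x i ∩ Bd).card : ℝ) ≤
      (f1 - f0) * (p * ((fre D x i).card : ℝ)) :=
    mul_le_mul_of_nonneg_left hp (by linarith)
  calc _ ≤ _ := by convert hfail
    _ = _ := hsum
    _ ≤ (f0 * (fre D x i).card + (f1 - f0) * (p * ((fre D x i).card : ℝ))) * c := by
        gcongr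
    _ = _ := by ring

end RD

open Filter Asymptotics

namespace RD
variable {n d : ℕ}

/-- `x` can be reached from `r` in at most `k` steps using half-edges outside `F` -/
def Rch (F : Finset (Fin n × Fin d)) (ω : Cfg n d) (r : Fin n) : ℕ → Fin n → Prop
  | 0, x => x = r
  | k + 1, x => Rch F ω r k x ∨ ∃ y i, Rch F ω r k y ∧ (y, i) ∉ F ∧ ω i y = x

def Disj (ω : Cfg n d) : Prop := ∀ i j x, i ≠ j → ω i x ≠ ω j x

lemma Rch.succ {F : Finset (Fin n × Fin d)} {ω : Cfg n d} {r x : Fin n} {k : ℕ}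
    (h : Rch F ω r k x) : Rch F ω r (k + 1) x := Or.inl h

lemma Rch.mono {F : Finset (Fin n × Fin d)} {ω : Cfg n d} {r x : Fin n} {k l : ℕ}
    (h : Rch F ω r k x) (hl : k ≤ l) : Rch F ω r l x := by
  induction hl with
  | refl => exact h
  | step _ ih => exact ih.succ

/-- base facts about an exploration state -/
structure LS (F D0 : Finset (Fin n × Fin d)) (ω00 : Cfg n d) (W Y : Finset (Fin n))
    (r : Fin n) (k : ℕ) (ω : Cfg n d) (D : Finset (Fin n × Fin d)) (X : Finset (Fin n)) :
    Prop where
  cfg : IsCfg ω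
  cl : Closed D ω
  hF : F ⊆ D
  base : ω ∈ cyl D0 ω00
  hD0 : D0 ⊆ D
  hD : ∀ p ∈ D, p.1 ∈ X ∪ Y ∪ W
  hXY : Disjoint X Y
  reach : ∀ ω' ∈ cyl D ω, ∀ x ∈ X, Rch F ω' r k x
  hDY : ∀ y ∈ Y, ∀ j, (y, j) ∈ D → (y, j) ∈ D0

/-- frontier: every vertex has exactly one exposed half-edge -/
def Fr (D : Finset (Fin n × Fin d)) (X S : Finset (Fin n)) : Prop :=
  S ⊆ X ∧ ∀ y ∈ S, ∃ i, ∀ j, (y, j) ∈ D ↔ j = i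

lemma fre_bound {D : Finset (Fin n × Fin d)} {x : Fin n} {i : Fin d} {Z : Finset (Fin n)}
    (hD : ∀ p ∈ D, p.1 ∈ Z) : n ≤ (fre D x i).card + Z.card + 1 := by
  classical
  have : (Finset.univ : Finset (Fin n)) ⊆ fre D x i ∪ Z ∪ {x} := by
    intro y _
    simp only [fre, Finset.mem_union, Finset.mem_filter, Finset.mem_univ, true_and,
      Finset.mem_singleton]
    by_cases h1 : y = x
    · exact Or.inr h1
    · by_cases h2 : (y, i) ∈ D
      · exact Or.inl (Or.inr (hD _ h2))
      · exact Or.inl (Or.inl ⟨h1, h2⟩)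
  have h := Finset.card_le_card this
  rw [Finset.card_univ, Fintype.card_fin] at h
  have h1 := Finset.card_union_le (fre D x i ∪ Z) {x}
  have h2 := Finset.card_union_le (fre D x i) Z
  rw [Finset.card_singleton] at h1
  omega

set_option maxHeartbeats 4000000 in
lemma level {Fail : Cfg n d → Prop} {F D0 : Finset (Fin n × Fin d)} {ω00 : Cfg n d}
    {W Y : Finset (Fin n)} {r : Fin n} {k κ : ℕ} (hκ : κ = 1 ∨ κ = 2)
    (hY : ∀ ω' ∈ cyl D0 ω00, ∀ y ∈ Y, Rch F ω' r (k + 1) y → ¬ Fail ω')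
    (hdisj : ∀ ω, Fail ω → Disj ω)
    {p lam A q : ℝ} (hp0 : 0 ≤ p) (hlam : 1 ≤ lam) (hA : 0 ≤ A) (hq : 0 ≤ q)
    {M x1 l1 b0 : ℕ} (hp : (x1 : ℝ) ≤ p * ((n : ℝ) - x1 - 1))
    (hT : ∀ ω D X S b, LS F D0 ω00 W Y r (k + 1) ω D X → Fr D X S → M ≤ S.card + κ * b →
      b0 ≤ b → (X ∪ Y ∪ W).card ≤ x1 → S.card ≤ l1 → PF Fail D ω (q + A * lam ^ b))
    (L : Finset (Fin n × Fin d)) :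
    ∀ ω D X S b, LS F D0 ω00 W Y r (k + 1) ω D X → Fr D X S →
      (∀ a ∈ L, a.1 ∈ X ∧ a.1 ∉ S ∧ ∀ ω' ∈ cyl D ω, Rch F ω' r k a.1) →
      (κ = 2 ∨ ((∀ a ∈ L, a.1 = r) ∧ ∀ y ∈ X, y = r ∨ ∃ j, (r, j) ∈ D ∧ ω j r = y)) →
      M ≤ (L \ D).card + S.card + κ * b → b0 ≤ b →
      (X ∪ Y ∪ W).card + L.card ≤ x1 → S.card + L.card ≤ l1 →
      PF Fail D ω (q + A * lam ^ b * (1 + p * (lam - 1)) ^ L.card) := by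
  have hc1 : 1 ≤ 1 + p * (lam - 1) := by nlinarith
  have hlam0 : 0 ≤ lam := by linarith
  set c := 1 + p * (lam - 1) with hc
  induction L using Finset.induction_on with
  | empty =>
    intro ω D X S b h1 h2 h3 h4 h5 h6 h7 h8
    simp only [Finset.card_empty, pow_zero, mul_one]
    simp only [Finset.empty_sdiff, Finset.card_empty, zero_add, add_zero] at h5 h7 h8
    exact hT ω D X S b h1 h2 h5 h6 h7 h8
  | insert a L ha ih =>
    intro ω D X S b h1 h2 h3 h4 h5 h6 h7 h8
    obtain ⟨x, i⟩ := a
    rw [Finset.card_insert_of_notMem ha] at h7 h8 ⊢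
    have hnn : 0 ≤ A * lam ^ b * c ^ L.card := by positivity
    have h3' := fun a ha => h3 a (Finset.mem_insert_of_mem ha)
    have hx := h3 _ (Finset.mem_insert_self (x, i) L)
    have h4' : (κ = 2 ∨ ((∀ a ∈ L, a.1 = r) ∧ ∀ y ∈ X, y = r ∨ ∃ j, (r, j) ∈ D ∧ ω j r = y)) := by
      rcases h4 with h4 | h4
      · exact Or.inl h4
      · exact Or.inr ⟨fun a ha => h4.1 a (Finset.mem_insert_of_mem ha), h4.2⟩
    by_cases hxD : (x, i) ∈ D
    · rw [Finset.insert_sdiff_of_mem _ hxD] at h5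
      refine (ih ω D X S b h1 h2 h3' h4' h5 h6 (by omega) (by omega)).mono ?_
      rw [pow_succ]
      nlinarith
    · rw [Finset.insert_sdiff_of_notMem _ hxD, Finset.card_insert_of_notMem
        (fun h => ha (Finset.mem_sdiff.1 h).1)] at h5
      have hfb := fre_bound (x := x) (i := i) h1.hD
      have hbad : ((fre D x i ∩ (X ∪ Y ∪ W)).card : ℝ) ≤ p * ((fre D x i).card : ℝ) := by
        have e1 : (fre D x i ∩ (X ∪ Y ∪ W)).card ≤ x1 :=
          (Finset.card_le_card Finset.inter_subset_right).trans (by omega)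
        have e2 : n ≤ (fre D x i).card + x1 + 1 := by omega
        have e3 : (n : ℝ) ≤ (fre D x i).card + x1 + 1 := by exact_mod_cast e2
        calc ((fre D x i ∩ (X ∪ Y ∪ W)).card : ℝ) ≤ x1 := by exact_mod_cast e1
          _ ≤ _ := hp
          _ ≤ _ := by
            apply mul_le_mul_of_nonneg_left _ hp0
            linarith
      have hst := step (Fail := Fail) h1.cl hxD (X ∪ Y ∪ W) p (q + A * lam ^ b * c ^ L.card)
        (q + A * lam ^ (b + 1) * c ^ L.card) (by rw [pow_succ]; nlinarith) hbad ?_ ?_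
      · refine hst.mono (le_of_eq ?_)
        rw [pow_succ, pow_succ, hc]
        ring
      · -- new vertex
        intro ω' hω' hy
        have hcfg := (mem_cyl.1 hω').1
        set y := ω' i x with hyd
        simp only [Finset.mem_union, not_or] at hy
        have hsub : cyl (ext D ω' x i) ω' ⊆ cyl D ω := cyl_sub hω' sub_ext
        have hxy : x ≠ y := fun h => hy.1.1 (h ▸ hx.1)
        have hyD : ∀ j, (y, j) ∉ D := by
          intro j hj
          have := h1.hD _ hj
          simp only [Finset.mem_union] at this
          tauto
        apply ih ω' (ext D ω' x i) (insert y X) (insert y S) b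
        · refine ⟨hcfg, closed_ext hcfg (closed_of_mem h1.cl hω') _ _, h1.hF.trans sub_ext,
            cyl_sub h1.base h1.hD0 hω', h1.hD0.trans sub_ext, ?_, ?_, ?_, ?_⟩
          · intro a ha
            rcases mem_ext.1 ha with rfl | rfl | ha
            · simp [hx.1]
            · simp [← hyd]
            · have := h1.hD _ ha
              simp only [Finset.mem_union, Finset.mem_insert] at this ⊢
              tauto
          · rw [Finset.disjoint_insert_left]
            exact ⟨hy.1.2, h1.hXY⟩
          · intro ω'' h'' z hz
            rcases Finset.mem_insert.1 hz with rfl | hz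
            · have e : ω'' i x = y := (mem_cyl.1 h'').2 (x, i) (mem_ext.2 (Or.inl rfl))
              exact Or.inr ⟨x, i, hx.2.2 _ (hsub h''), fun h => hxD (h1.hF h), e⟩
            · exact h1.reach _ (hsub h'') _ hz
          · intro z hz j hj
            rcases mem_ext.1 hj with h | h | h
            · rw [Prod.mk.injEq] at h
              exact absurd (h.1 ▸ hz) (Finset.disjoint_left.1 h1.hXY hx.1)
            · rw [Prod.mk.injEq] at h
              exact absurd (by rw [hyd, ← h.1]; exact hz) hy.1.2
            · exact h1.hDY z hz j h
        · refine ⟨Finset.insert_subset_insert _ h2.1, ?_⟩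
          intro z hz
          rcases Finset.mem_insert.1 hz with rfl | hz
          · refine ⟨i, fun j => ?_⟩
            rw [mem_ext]
            simp only [Prod.mk.injEq, hyD, or_false, ← hyd, true_and]
            simp [hxy.symm]
          · obtain ⟨i', hi'⟩ := h2.2 z hz
            refine ⟨i', fun j => ?_⟩
            rw [mem_ext, ← hi' j]
            have z1 : z ≠ x := fun h => hx.2.1 (h ▸ hz)
            have z2 : z ≠ y := fun h => hy.1.1 (h ▸ h2.1 hz)
            simp [z1, ← hyd, z2]
        · intro a ha
          have := h3' a ha
          refine ⟨Finset.mem_insert_of_mem this.1, ?_, fun ω'' h'' => this.2.2 _ (hsub h'')⟩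
          rw [Finset.mem_insert, not_or]
          exact ⟨fun h => hy.1.1 (h ▸ this.1), this.2.1⟩
        · rcases h4 with h4 | h4
          · exact Or.inl h4
          · right
            refine ⟨fun a ha => h4.1 a (Finset.mem_insert_of_mem ha), ?_⟩
            have hxr : x = r := h4.1 (x, i) (Finset.mem_insert_self _ _)
            intro z hz
            rcases Finset.mem_insert.1 hz with rfl | hz
            · right
              refine ⟨i, mem_ext.2 (Or.inl (by rw [hxr])), by rw [hyd, hxr]⟩
            · rcases h4.2 z hz with h | ⟨j, hj, hj'⟩
              · exact Or.inl h
              · exact Or.inr ⟨j, sub_ext hj, by rw [← hj']; exact (mem_cyl.1 hω').2 _ hj⟩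
        · have e : L \ ext D ω' x i = L \ D := by
            ext a
            simp only [Finset.mem_sdiff, mem_ext, not_or]
            constructor
            · tauto
            · rintro ⟨g1, g2⟩
              refine ⟨g1, ?_, ?_, g2⟩
              · rintro rfl; exact ha g1
              · rintro rfl; exact hy.1.1 (h3' _ g1).1
          rw [e, Finset.card_insert_of_notMem (fun h => hy.1.1 (h2.1 h))]
          omega
        · exact h6
        · rw [Finset.insert_union, Finset.insert_union]
          have := Finset.card_insert_le y (X ∪ Y ∪ W)
          omega
        · have := Finset.card_insert_le y S
          omega
      · -- bad
        intro ω' hω' hy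
        have hcfg := (mem_cyl.1 hω').1
        set y := ω' i x with hyd
        have hsub : cyl (ext D ω' x i) ω' ⊆ cyl D ω := cyl_sub hω' sub_ext
        have hxy : y ≠ x := (hcfg i x).2
        have hf1 : 0 ≤ q + A * lam ^ (b + 1) * c ^ L.card := by positivity
        by_cases hyY : y ∈ Y
        · refine (PF_zero ?_).mono hf1
          intro ω'' h''
          have e : ω'' i x = y := (mem_cyl.1 h'').2 (x, i) (mem_ext.2 (Or.inl rfl))
          refine hY ω'' (cyl_sub h1.base h1.hD0 (hsub h'')) y hyY ?_
          exact Or.inr ⟨x, i, hx.2.2 _ (hsub h''), fun h => hxD (h1.hF h), e⟩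
        by_cases hbad1 : κ = 1 ∧ y ∈ X
        · refine (PF_zero ?_).mono hf1
          intro ω'' h'' hfl
          have e : ω'' i x = y := (mem_cyl.1 h'').2 (x, i) (mem_ext.2 (Or.inl rfl))
          rcases h4 with h4 | h4
          · omega
          have hxr : x = r := h4.1 (x, i) (Finset.mem_insert_self _ _)
          rcases h4.2 y hbad1.2 with h | ⟨j, hj, hj'⟩
          · exact hxy (h.trans hxr.symm)
          · have hij : i ≠ j := by
              rintro rfl
              rw [← hxr] at hj
              exact hxD hj
            refine hdisj _ hfl i j x hij ?_
            rw [e, ← hj', hxr]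
            exact ((mem_cyl.1 (hsub h'')).2 _ hj).symm
        apply ih ω' (ext D ω' x i) X (S.erase y) (b + 1)
        · refine ⟨hcfg, closed_ext hcfg (closed_of_mem h1.cl hω') _ _, h1.hF.trans sub_ext,
            cyl_sub h1.base h1.hD0 hω', h1.hD0.trans sub_ext, ?_, h1.hXY, ?_, ?_⟩
          · intro a ha
            rcases mem_ext.1 ha with rfl | rfl | ha
            · simp [hx.1]
            · exact hy
            · exact h1.hD _ ha
          · intro ω'' h'' z hz
            exact h1.reach _ (hsub h'') _ hz
          · intro z hz j hj
            rcases mem_ext.1 hj with h | h | h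
            · rw [Prod.mk.injEq] at h
              exact absurd (h.1 ▸ hz) (Finset.disjoint_left.1 h1.hXY hx.1)
            · rw [Prod.mk.injEq] at h
              exact absurd (by rw [hyd, ← h.1]; exact hz) hyY
            · exact h1.hDY z hz j h
        · refine ⟨(Finset.erase_subset _ _).trans h2.1, ?_⟩
          intro z hz
          rw [Finset.mem_erase] at hz
          obtain ⟨i', hi'⟩ := h2.2 z hz.2
          refine ⟨i', fun j => ?_⟩
          rw [mem_ext, ← hi' j]
          have z1 : z ≠ x := fun h => hx.2.1 (h ▸ hz.2)
          simp [z1, ← hyd, hz.1]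
        · intro a ha
          have := h3' a ha
          exact ⟨this.1, fun h => this.2.1 (Finset.mem_of_mem_erase h),
            fun ω'' h'' => this.2.2 _ (hsub h'')⟩
        · rcases h4 with h4 | h4
          · exact Or.inl h4
          · right
            refine ⟨fun a ha => h4.1 a (Finset.mem_insert_of_mem ha), ?_⟩
            intro z hz
            rcases h4.2 z hz with h | ⟨j, hj, hj'⟩
            · exact Or.inl h
            · exact Or.inr ⟨j, sub_ext hj, by rw [← hj']; exact (mem_cyl.1 hω').2 _ hj⟩
        · have e : L \ ext D ω' x i = (L \ D).erase (y, i) := by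
            ext a
            simp only [Finset.mem_sdiff, mem_ext, not_or, Finset.mem_erase]
            constructor
            · tauto
            · rintro ⟨g1, g2, g3⟩
              refine ⟨g2, ?_, g1, g3⟩
              rintro rfl; exact ha g2
          rw [e]
          have g1 := Finset.pred_card_le_card_erase (s := L \ D) (a := (y, i))
          have g2 := Finset.pred_card_le_card_erase (s := S) (a := y)
          have g3 : y ∉ X → ((L \ D).erase (y, i)).card = (L \ D).card := by
            intro h
            rw [Finset.erase_eq_of_notMem]
            intro h'
            exact h (h3' _ (Finset.mem_sdiff.1 h').1).1
          have g4 : y ∉ X → (S.erase y).card = S.card := by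
            intro h
            rw [Finset.erase_eq_of_notMem]
            intro h'
            exact h (h2.1 h')
          have g5 : y ∈ S → ((L \ D).erase (y, i)).card = (L \ D).card := by
            intro h
            rw [Finset.erase_eq_of_notMem]
            intro h'
            exact (h3' _ (Finset.mem_sdiff.1 h').1).2.1 h
          have g6 : y ∉ S → (S.erase y).card = S.card := by
            intro h
            rw [Finset.erase_eq_of_notMem h]
          rw [mul_add, mul_one]
          by_cases hyX : y ∈ X
          · have : κ = 2 := by
              rcases hκ with h | h
              · exact absurd ⟨h, hyX⟩ hbad1
              · exact h
            by_cases hyS : y ∈ S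
            · have := g5 hyS; omega
            · have := g6 hyS; omega
          · have := g3 hyX
            have := g4 hyX
            rcases hκ with h | h <;> omega
        · omega
        · omega
        · have := Finset.card_erase_le (s := S) (a := y)
          omega

end RD

open Filter Asymptotics

namespace RD
variable {n d : ℕ}

/-- number of exposures per frontier vertex in `j` levels -/
def GG (d : ℕ) : ℕ → ℕ
  | 0 => 0
  | j + 1 => (d - 1) * (1 + GG d j)

lemma hp_mono {p : ℝ} (hp0 : 0 ≤ p) {x x1 : ℕ} (h : x ≤ x1)
    (hp : (x1 : ℝ) ≤ p * ((n : ℝ) - x1 - 1)) : (x : ℝ) ≤ p * ((n : ℝ) - x - 1) := by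
  have h' : (x : ℝ) ≤ x1 := by exact_mod_cast h
  nlinarith

lemma LS.succ {F D0 : Finset (Fin n × Fin d)} {ω00 : Cfg n d} {W Y : Finset (Fin n)}
    {r : Fin n} {k : ℕ} {ω : Cfg n d} {D : Finset (Fin n × Fin d)} {X : Finset (Fin n)}
    (h : LS F D0 ω00 W Y r k ω D X) : LS F D0 ω00 W Y r (k + 1) ω D X :=
  { h with reach := fun ω' h' x hx => (h.reach ω' h' x hx).succ }

lemma card_half {D : Finset (Fin n × Fin d)} {X S : Finset (Fin n)} (h : Fr D X S) :
    ((S ×ˢ (Finset.univ : Finset (Fin d))).filter (fun a => a ∉ D)).card = (d - 1) * S.card := by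
  classical
  rw [Finset.card_eq_sum_card_fiberwise (f := Prod.fst) (t := S)]
  · rw [Finset.sum_congr rfl (g := fun _ => d - 1)]
    · simp [mul_comm]
    · intro x hx
      obtain ⟨i, hi⟩ := h.2 x hx
      have : ((S ×ˢ (Finset.univ : Finset (Fin d))).filter (fun a => a ∉ D)).filter
          (fun a => a.1 = x) = ((Finset.univ : Finset (Fin d)).erase i).image
            (fun j => (x, j)) := by
        ext ⟨y, j⟩
        simp only [Finset.mem_filter, Finset.mem_product, Finset.mem_univ, and_true,
          Finset.mem_image, Finset.mem_erase, Prod.mk.injEq]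
        constructor
        · rintro ⟨⟨h1, h2⟩, rfl⟩
          exact ⟨j, fun h => h2 ((hi j).2 h), rfl, rfl⟩
        · rintro ⟨j', h1, rfl, rfl⟩
          exact ⟨⟨hx, fun h => h1 ((hi j').1 h)⟩, rfl⟩
      rw [this, Finset.card_image_of_injective _ (fun a b h => by simpa using h),
        Finset.card_erase_of_mem (Finset.mem_univ _), Finset.card_univ, Fintype.card_fin]
  · intro a ha
    simp only [Finset.coe_filter, Finset.mem_product, Set.mem_ofPred_eq] at ha
    exact ha.1.1

lemma phase {Fail : Cfg n d → Prop} {F D0 : Finset (Fin n × Fin d)} {ω00 : Cfg n d}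
    {W Y : Finset (Fin n)} {r : Fin n} {kend J : ℕ} (hd : 3 ≤ d)
    (hY : ∀ ω' ∈ cyl D0 ω00, ∀ y ∈ Y, Rch F ω' r kend y → ¬ Fail ω')
    (hdisj : ∀ ω, Fail ω → Disj ω)
    {p lam A q : ℝ} (hp0 : 0 ≤ p) (hlam : 1 ≤ lam) (hA : 0 ≤ A) (hq : 0 ≤ q)
    {x1 smax Z b0 : ℕ} (hp : (x1 : ℝ) ≤ p * ((n : ℝ) - x1 - 1))
    (hT : ∀ ω D X S b, LS F D0 ω00 W Y r kend ω D X → Fr D X S →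
      Z * (d - 1) ^ J ≤ S.card + b * (d - 1) ^ J → b0 ≤ b →
      (X ∪ Y ∪ W).card ≤ x1 → S.card ≤ smax → PF Fail D ω (q + A * lam ^ b))
    (j : ℕ) :
    ∀ t k ω D X S b, t + j = J → k + j = kend → LS F D0 ω00 W Y r k ω D X → Fr D X S →
      Z * (d - 1) ^ t ≤ S.card + b * (d - 1) ^ t → b0 ≤ b →
      (X ∪ Y ∪ W).card + S.card * GG d j ≤ x1 → S.card * (d - 1) ^ j ≤ smax →
      PF Fail D ω (q + A * lam ^ b * (1 + p * (lam - 1)) ^ (S.card * GG d j)) := by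
  have hc1 : 1 ≤ 1 + p * (lam - 1) := by nlinarith
  induction j with
  | zero =>
    intro t k ω D X S b ht hk h1 h2 h3 h3b h4 h5
    simp only [add_zero] at ht hk
    subst ht hk
    simp only [GG, mul_zero, pow_zero, mul_one, add_zero] at *
    exact hT ω D X S b h1 h2 h3 h3b h4 h5
  | succ j ih =>
    intro t k ω D X S b ht hk h1 h2 h3 h3b h4 h5
    set c := 1 + p * (lam - 1) with hc
    set L := (S ×ˢ (Finset.univ : Finset (Fin d))).filter (fun a => a ∉ D) with hL
    have hLc : L.card = (d - 1) * S.card := card_half h2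
    have hG : S.card * GG d (j + 1) = L.card + L.card * GG d j := by
      rw [hLc, GG]; ring
    rw [hG] at h4 ⊢
    have hLm : ∀ a ∈ L, a.1 ∈ S ∧ a ∉ D := by
      intro a ha
      rw [hL, Finset.mem_filter, Finset.mem_product] at ha
      exact ⟨ha.1.1, ha.2⟩
    have hLD : L \ D = L := by
      rw [Finset.sdiff_eq_self_iff_disjoint, Finset.disjoint_left]
      exact fun a ha => (hLm a ha).2
    have hlev := level (Fail := Fail) (F := F) (D0 := D0) (ω00 := ω00) (W := W) (Y := Y) (r := r)
      (k := k) (κ := 2) (Or.inr rfl)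
      (fun ω' h' y hy hr => hY ω' h' y hy (hr.mono (by omega))) hdisj hp0 hlam
      (A := A * c ^ (L.card * GG d j)) (q := q) (by positivity) hq
      (M := L.card + 2 * b) (x1 := (X ∪ Y ∪ W).card + L.card) (l1 := L.card) (b0 := b)
      (hp_mono hp0 (by omega) hp) ?_ L ω D X ∅ b h1.succ ⟨by simp, by simp⟩ ?_
      (Or.inl rfl) (by rw [hLD]; simp) le_rfl le_rfl (by simp)
    · refine hlev.mono (le_of_eq ?_)
      rw [pow_add]
      ring
    · intro ω' D' X' S' b' g1 g2 g3 g4 g5 g6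
      refine (ih (t + 1) (k + 1) ω' D' X' S' b' (by omega) (by omega) g1 g2 ?_ (h3b.trans g4) ?_ ?_).mono ?_
      · obtain ⟨e, rfl⟩ := Nat.exists_eq_add_of_le g4
        have ha : 2 ≤ (d - 1) ^ (t + 1) := by
          calc 2 ≤ d - 1 := by omega
            _ ≤ (d - 1) ^ (t + 1) := Nat.le_self_pow (by omega) _
        have h3' := Nat.mul_le_mul_left (d - 1) h3
        have e1 : (d - 1) * (Z * (d - 1) ^ t) = Z * (d - 1) ^ (t + 1) := by ring
        have e2 : (d - 1) * (S.card + b * (d - 1) ^ t) = L.card + b * (d - 1) ^ (t + 1) := by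
          rw [hLc]; ring
        rw [e1, e2] at h3'
        have := Nat.mul_le_mul_left e ha
        rw [add_mul]
        omega
      · have := Nat.mul_le_mul_right (GG d j) g6
        omega
      · calc S'.card * (d - 1) ^ j ≤ L.card * (d - 1) ^ j := Nat.mul_le_mul_right _ g6
          _ = S.card * (d - 1) ^ (j + 1) := by rw [hLc]; ring
          _ ≤ _ := h5
      · have : c ^ (S'.card * GG d j) ≤ c ^ (L.card * GG d j) :=
          pow_le_pow_right₀ hc1 (Nat.mul_le_mul_right _ g6)
        have h0 : 0 ≤ A * lam ^ b' := by positivity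
        nlinarith
    · intro a ha
      refine ⟨h2.1 (hLm a ha).1, by simp, fun ω' h' => h1.reach ω' h' _ (h2.1 (hLm a ha).1)⟩

lemma grow_root {Fail : Cfg n d → Prop} {F D0 : Finset (Fin n × Fin d)} {ω00 : Cfg n d}
    {W Y : Finset (Fin n)} {r : Fin n} {J : ℕ} (hd : 3 ≤ d)
    (hY : ∀ ω' ∈ cyl D0 ω00, ∀ y ∈ Y, Rch F ω' r (J + 1) y → ¬ Fail ω')
    (hdisj : ∀ ω, Fail ω → Disj ω)
    {p lam A q : ℝ} (hp0 : 0 ≤ p) (hlam : 1 ≤ lam) (hA : 0 ≤ A) (hq : 0 ≤ q)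
    {x1 b0 : ℕ} (hp : (x1 : ℝ) ≤ p * ((n : ℝ) - x1 - 1))
    (hT : ∀ ω D X S b, LS F D0 ω00 W Y r (J + 1) ω D X → Fr D X S →
      3 * (d - 1) ^ J ≤ S.card + b * (d - 1) ^ J → b0 ≤ b →
      (X ∪ Y ∪ W).card ≤ x1 → S.card ≤ d * (d - 1) ^ J → PF Fail D ω (q + A * lam ^ b))
    {ω : Cfg n d} {D : Finset (Fin n × Fin d)} {b : ℕ} (h1 : LS F D0 ω00 W Y r 0 ω D {r})
    (hb0 : b0 ≤ b)
    (hb : 3 ≤ ((Finset.univ : Finset (Fin d)).filter (fun j => (r, j) ∉ D)).card + b)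
    (hx1 : ({r} ∪ Y ∪ W).card + d * (1 + GG d J) ≤ x1) :
    PF Fail D ω (q + A * lam ^ b * (1 + p * (lam - 1)) ^ (d * (1 + GG d J))) := by
  have hc1 : 1 ≤ 1 + p * (lam - 1) := by nlinarith
  set c := 1 + p * (lam - 1) with hc
  set L := ((Finset.univ : Finset (Fin d)).filter (fun j => (r, j) ∉ D)).image
    (fun j => (r, j)) with hL
  have hLc : L.card = ((Finset.univ : Finset (Fin d)).filter (fun j => (r, j) ∉ D)).card :=
    Finset.card_image_of_injective _ (fun a b h => by simpa using h)
  have hLd : L.card ≤ d := by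
    rw [hLc]
    refine (Finset.card_filter_le _ _).trans (by simp)
  have hLm : ∀ a ∈ L, a.1 = r ∧ a ∉ D := by
    intro a ha
    rw [hL, Finset.mem_image] at ha
    obtain ⟨j, hj, rfl⟩ := ha
    exact ⟨rfl, (Finset.mem_filter.1 hj).2⟩
  have hLD : L \ D = L := by
    rw [Finset.sdiff_eq_self_iff_disjoint, Finset.disjoint_left]
    exact fun a ha => (hLm a ha).2
  have hlev := level (Fail := Fail) (F := F) (D0 := D0) (ω00 := ω00) (W := W) (Y := Y) (r := r)
      (k := 0) (κ := 1) (Or.inl rfl)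
      (fun ω' h' y hy hr => hY ω' h' y hy (hr.mono (by omega))) hdisj hp0 hlam
      (A := A * c ^ (d * GG d J)) (q := q) (by positivity) hq
      (M := L.card + b) (x1 := ({r} ∪ Y ∪ W).card + L.card) (l1 := L.card) (b0 := b)
      (hp_mono hp0 (by rw [mul_add] at hx1; omega) hp) ?_ L ω D {r} ∅ b h1.succ
      ⟨by simp, by simp⟩ ?_
      (Or.inr ⟨fun a ha => (hLm a ha).1, fun y hy => Or.inl (Finset.mem_singleton.1 hy)⟩)
      (by rw [hLD]; simp) le_rfl le_rfl (by simp)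
  · refine hlev.mono ?_
    have e : c ^ (d * (1 + GG d J)) = c ^ (d * GG d J) * c ^ d := by rw [← pow_add]; ring
    rw [e]
    have : c ^ L.card ≤ c ^ d := pow_le_pow_right₀ hc1 hLd
    have h0 : 0 ≤ A * lam ^ b * c ^ (d * GG d J) := by positivity
    nlinarith
  · intro ω' D' X' S' b' g1 g2 g3 g4 g5 g6
    have hSd : S'.card ≤ d := g6.trans hLd
    have hph := phase (Fail := Fail) (J := J) (kend := J + 1) hd hY hdisj hp0 hlam hA hq
      (Z := 3) (smax := d * (d - 1) ^ J) hp hT J 0 1 ω' D' X' S' b' (by omega) (by omega) g1 g2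
      (by simp; omega) (hb0.trans g4) ?_ (Nat.mul_le_mul_right _ hSd)
    · refine hph.mono ?_
      have : c ^ (S'.card * GG d J) ≤ c ^ (d * GG d J) :=
          pow_le_pow_right₀ hc1 (Nat.mul_le_mul_right _ hSd)
      have h0 : 0 ≤ A * lam ^ b' := by positivity
      nlinarith
    · have := Nat.mul_le_mul_right (GG d J) hSd
      rw [mul_add, mul_one] at hx1
      omega
  · intro a ha
    refine ⟨by simp [(hLm a ha).1], by simp, fun ω' _ => (hLm a ha).1⟩

end RD

open Filter Asymptotics

namespace RD
variable {n d : ℕ}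

lemma connect {Fail : Cfg n d → Prop} {i : Fin d} (B : Finset (Fin n)) (t : ℕ) :
    ∀ (ω : Cfg n d) (D : Finset (Fin n × Fin d)) (A : Finset (Fin n)), Closed D ω →
      (∀ x ∈ A, (x, i) ∉ D) → (∀ x ∈ B, (x, i) ∉ D) → Disjoint A B →
      (∀ ω' ∈ cyl D ω, ∀ x ∈ A, ω' i x ∈ B → ¬ Fail ω') → 2 * t ≤ A.card →
      PF Fail D ω ((1 - (B.card : ℝ) / n) ^ t) := by
  classical
  have hBn : (B.card : ℝ) ≤ n := by
    have := Finset.card_le_univ B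
    rw [Fintype.card_fin] at this
    exact_mod_cast this
  have hb : 0 ≤ 1 - (B.card : ℝ) / n := by
    have : (B.card : ℝ) / n ≤ 1 := div_le_one_of_le₀ hBn (by positivity)
    linarith
  induction t with
  | zero => intro ω D A _ _ _ _ _ _; simpa using PF_one
  | succ t ih =>
    intro ω D A hc hA hB hAB hfl ht
    have hne : A.Nonempty := by
      rw [← Finset.card_pos]; omega
    obtain ⟨x, hx⟩ := hne
    have hst := step (Fail := Fail) hc (hA x hx) Bᶜ (1 - (B.card : ℝ) / n) 0
      ((1 - (B.card : ℝ) / n) ^ t) (by positivity) ?_ ?_ ?_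
    · refine hst.mono (le_of_eq ?_)
      rw [pow_succ]; ring
    · have hsub : B ⊆ fre D x i := by
        intro y hy
        simp only [fre, Finset.mem_filter, Finset.mem_univ, true_and]
        exact ⟨fun h => Finset.disjoint_left.1 hAB hx (h ▸ hy), hB y hy⟩
      have e : fre D x i ∩ Bᶜ = fre D x i \ B := by
        ext y; simp
      rw [e, Finset.card_sdiff_of_subset hsub, Nat.cast_sub (Finset.card_le_card hsub)]
      have hfn : ((fre D x i).card : ℝ) ≤ n := by
        have := Finset.card_le_univ (fre D x i)
        rw [Fintype.card_fin] at this
        exact_mod_cast this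
      have hn : 0 < (n : ℝ) := by
        have : 0 < n := Fin.pos x
        exact_mod_cast this
      have : (B.card : ℝ) / n * (fre D x i).card ≤ B.card := by
        rw [div_mul_eq_mul_div, div_le_iff₀ hn]
        gcongr
      linarith
    · intro ω' h' hy
      simp only [Finset.mem_compl, not_not] at hy
      refine PF_zero ?_
      intro ω'' h''
      have e : ω'' i x = ω' i x := (mem_cyl.1 h'').2 (x, i) (mem_ext.2 (Or.inl rfl))
      exact hfl ω'' (cyl_sub h' sub_ext h'') x hx (e ▸ hy)
    · intro ω' h' hy
      simp only [Finset.mem_compl] at hy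
      apply ih ω' (ext D ω' x i) ((A.erase x).erase (ω' i x))
      · exact closed_ext (mem_cyl.1 h').1 (closed_of_mem hc h') _ _
      · intro z hz
        simp only [Finset.mem_erase] at hz
        rw [mem_ext]
        simp [hz.1, hz.2.1, hA z hz.2.2]
      · intro z hz
        rw [mem_ext]
        have h1 : z ≠ x := fun h => Finset.disjoint_left.1 hAB hx (h ▸ hz)
        have h2 : z ≠ ω' i x := fun h => hy (h ▸ hz)
        simp [h1, h2, hB z hz]
      · exact hAB.mono_left ((Finset.erase_subset _ _).trans (Finset.erase_subset _ _))
      · intro ω'' h'' z hz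
        simp only [Finset.mem_erase] at hz
        exact hfl ω'' (cyl_sub h' sub_ext h'') z hz.2.2
      · have g1 := Finset.pred_card_le_card_erase (s := A.erase x) (a := ω' i x)
        have g2 := Finset.pred_card_le_card_erase (s := A) (a := x)
        omega

lemma color_choice {D : Finset (Fin n × Fin d)} {X S X' S' : Finset (Fin n)} (hd : 3 ≤ d)
    (h : Fr D X S) (h' : Fr D X' S') :
    ∃ i, S.card ≤ 2 * (S.filter (fun x => (x, i) ∉ D)).card ∧
      S'.card ≤ 2 * (S'.filter (fun x => (x, i) ∉ D)).card := by
  have key : ∀ {X S : Finset (Fin n)}, Fr D X S → ∀ i j : Fin d, i ≠ j →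
      S.card ≤ (S.filter (fun x => (x, i) ∉ D)).card + (S.filter (fun x => (x, j) ∉ D)).card := by
    intro X S h i j hij
    rw [← Finset.card_union_add_card_inter]
    refine le_trans (Finset.card_le_card ?_) (Nat.le_add_right _ _)
    intro x hx
    obtain ⟨c, hc⟩ := h.2 x hx
    simp only [Finset.mem_union, Finset.mem_filter, hx, true_and, hc]
    by_contra hh
    push Not at hh
    exact hij (hh.1.trans hh.2.symm)
  by_contra hcon
  push Not at hcon
  have e0 := hcon ⟨0, by omega⟩
  have e1 := hcon ⟨1, by omega⟩
  have e2 := hcon ⟨2, by omega⟩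
  have a01 := key h ⟨0, by omega⟩ ⟨1, by omega⟩ (by simp)
  have a02 := key h ⟨0, by omega⟩ ⟨2, by omega⟩ (by simp)
  have a12 := key h ⟨1, by omega⟩ ⟨2, by omega⟩ (by simp)
  have b01 := key h' ⟨0, by omega⟩ ⟨1, by omega⟩ (by simp)
  have b02 := key h' ⟨0, by omega⟩ ⟨2, by omega⟩ (by simp)
  have b12 := key h' ⟨1, by omega⟩ ⟨2, by omega⟩ (by simp)
  omega

lemma Rch_join {F : Finset (Fin n × Fin d)} {ω : Cfg n d} (hω : IsCfg ω) (hF : Closed F ω)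
    {u v : Fin n} (l : ℕ) : ∀ (k : ℕ) (x : Fin n), Rch F ω u k x → Rch F ω v l x →
      Rch F ω u (k + l) v := by
  induction l with
  | zero =>
    intro k x h1 h2
    have : x = v := h2
    subst this
    exact h1
  | succ l ih =>
    intro k x h1 h2
    rcases h2 with h2 | ⟨y, i, h2, h3, h4⟩
    · exact (ih k x h1 h2).succ
    · have h5 : Rch F ω u (k + 1) y := by
        right
        refine ⟨x, i, h1, fun h => h3 ?_, ?_⟩
        · have := hF _ h
          simp only [← h4, (hω i y).1] at this
          exact this
        · rw [← h4, (hω i y).1]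
      have := ih (k + 1) y h5 h2
      rwa [show k + 1 + l = k + (l + 1) by ring] at this

def Fail (F : Finset (Fin n × Fin d)) (u v : Fin n) (s : ℕ) (ω : Cfg n d) : Prop :=
  Disj ω ∧ ¬ Rch F ω u s v

lemma not_fail {F : Finset (Fin n × Fin d)} {ω ω0 : Cfg n d} {D : Finset (Fin n × Fin d)}
    (h : ω ∈ cyl D ω0) (hcl : Closed D ω0) (hω0 : IsCfg ω0) (hF : Closed F ω0) (hFD : F ⊆ D)
    {u v x : Fin n} {k l s : ℕ}
    (h1 : Rch F ω u k x) (h2 : Rch F ω v l x) (hs : k + l ≤ s) : ¬ Fail F u v s ω := by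
  intro hf
  refine hf.2 ((Rch_join (mem_cyl.1 h).1 ?_ l k x h1 h2).mono hs)
  exact closed_of_mem hF (mem_cyl.2 ⟨(mem_cyl.1 h).1, fun p hp => (mem_cyl.1 h).2 p (hFD hp)⟩)

lemma Fr.congr {D D' : Finset (Fin n × Fin d)} {X S : Finset (Fin n)} (h : Fr D X S)
    (hD : D ⊆ D') (hX : ∀ y ∈ X, ∀ j, (y, j) ∈ D' → (y, j) ∈ D) : Fr D' X S := by
  refine ⟨h.1, fun y hy => ?_⟩
  obtain ⟨i, hi⟩ := h.2 y hy
  refine ⟨i, fun j => ?_⟩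
  rw [← hi]
  exact ⟨hX y (h.1 hy) j, fun h => hD h⟩

end RD

open Filter Asymptotics

namespace RD
variable {n d : ℕ}

/-- symmetric exploration state around two roots -/
structure St (F : Finset (Fin n × Fin d)) (u v : Fin n) (W : Finset (Fin n)) (k l : ℕ)
    (ω : Cfg n d) (D : Finset (Fin n × Fin d)) (X Y : Finset (Fin n)) : Prop where
  cfg : IsCfg ω
  cl : Closed D ω
  clF : Closed F ω
  hF : F ⊆ D
  hD : ∀ p ∈ D, p.1 ∈ X ∪ Y ∪ W
  hXY : Disjoint X Y
  ru : ∀ ω' ∈ cyl D ω, ∀ x ∈ X, Rch F ω' u k x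
  rv : ∀ ω' ∈ cyl D ω, ∀ x ∈ Y, Rch F ω' v l x

lemma St.symm {F : Finset (Fin n × Fin d)} {u v : Fin n} {W : Finset (Fin n)} {k l : ℕ}
    {ω : Cfg n d} {D : Finset (Fin n × Fin d)} {X Y : Finset (Fin n)}
    (h : St F u v W k l ω D X Y) : St F v u W l k ω D Y X where
  cfg := h.cfg
  cl := h.cl
  clF := h.clF
  hF := h.hF
  hD := by
    intro p hp
    have := h.hD p hp
    rwa [Finset.union_comm Y X]
  hXY := h.hXY.symm
  ru := h.rv
  rv := h.ru

lemma St.toLS {F : Finset (Fin n × Fin d)} {u v : Fin n} {W : Finset (Fin n)} {k l : ℕ}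
    {ω : Cfg n d} {D : Finset (Fin n × Fin d)} {X Y : Finset (Fin n)}
    (h : St F u v W k l ω D X Y) : LS F D ω W Y u k ω D X where
  cfg := h.cfg
  cl := h.cl
  hF := h.hF
  base := self_mem_cyl h.cfg
  hD0 := subset_rfl
  hD := h.hD
  hXY := h.hXY
  reach := h.ru
  hDY := fun _ _ _ h => h

lemma St.next {F : Finset (Fin n × Fin d)} {u v : Fin n} {W : Finset (Fin n)} {k l k' : ℕ}
    {ω ω' : Cfg n d} {D D' : Finset (Fin n × Fin d)} {X X' Y : Finset (Fin n)}
    (h : St F u v W k l ω D X Y) (h' : LS F D ω W Y u k' ω' D' X') :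
    St F u v W k' l ω' D' X' Y where
  cfg := h'.cfg
  cl := h'.cl
  clF := by
    refine closed_of_mem h.clF (mem_cyl.2 ⟨h'.cfg, fun p hp => ?_⟩)
    exact (mem_cyl.1 h'.base).2 p (h.hF hp)
  hF := h'.hF
  hD := h'.hD
  hXY := h'.hXY
  ru := h'.reach
  rv := fun ω'' h'' => h.rv ω'' (cyl_sub h'.base h'.hD0 h'')

lemma St.fail_of {F : Finset (Fin n × Fin d)} {u v : Fin n} {W : Finset (Fin n)} {k l : ℕ}
    {ω : Cfg n d} {D : Finset (Fin n × Fin d)} {X Y : Finset (Fin n)}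
    (h : St F u v W k l ω D X Y) {k' s : ℕ} (hs : k' + l ≤ s) :
    ∀ ω' ∈ cyl D ω, ∀ y ∈ Y, Rch F ω' u k' y → ¬ Fail F u v s ω' := by
  intro ω' h' y hy hr
  exact not_fail h' h.cl h.cfg h.clF h.hF hr (h.rv ω' h' y hy) hs

lemma St.fail_of' {F : Finset (Fin n × Fin d)} {u v : Fin n} {W : Finset (Fin n)} {k l : ℕ}
    {ω : Cfg n d} {D : Finset (Fin n × Fin d)} {X Y : Finset (Fin n)}
    (h : St F u v W k l ω D X Y) {l' s : ℕ} (hs : k + l' ≤ s) :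
    ∀ ω' ∈ cyl D ω, ∀ y ∈ X, Rch F ω' v l' y → ¬ Fail F u v s ω' := by
  intro ω' h' y hy hr
  exact not_fail h' h.cl h.cfg h.clF h.hF (h.ru ω' h' y hy) hr hs

lemma endE {F : Finset (Fin n × Fin d)} {u v : Fin n} {W : Finset (Fin n)} {k l s : ℕ}
    {ω : Cfg n d} {D : Finset (Fin n × Fin d)} {X Y S S' : Finset (Fin n)} (hd : 3 ≤ d)
    (h : St F u v W k l ω D X Y) (hs : k + 1 + l ≤ s) (h1 : Fr D X S) (h2 : Fr D Y S')
    {sU sV : ℕ} (hU : sU ≤ S.card) (hV : sV ≤ S'.card) :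
    PF (Fail F u v s) D ω ((1 - (sV : ℝ) / (2 * n)) ^ (sU / 4)) := by
  obtain ⟨i, hi, hi'⟩ := color_choice hd h1 h2
  set A := S.filter (fun x => (x, i) ∉ D) with hA
  set B := S'.filter (fun x => (x, i) ∉ D) with hB
  have hc := connect (Fail := Fail F u v s) (i := i) B (sU / 4) ω D A h.cl
    (fun x hx => (Finset.mem_filter.1 hx).2) (fun x hx => (Finset.mem_filter.1 hx).2)
    (Finset.disjoint_of_subset_left ((Finset.filter_subset _ _).trans h1.1)
      (Finset.disjoint_of_subset_right ((Finset.filter_subset _ _).trans h2.1) h.hXY)) ?_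
    (by omega)
  · refine hc.mono ?_
    have hBn : (B.card : ℝ) ≤ n := by
      have := Finset.card_le_univ B
      rw [Fintype.card_fin] at this
      exact_mod_cast this
    have hb : (B.card : ℝ) / n ≤ 1 := div_le_one_of_le₀ hBn (by positivity)
    have hle : (sV : ℝ) / (2 * n) ≤ (B.card : ℝ) / n := by
      have e : (B.card : ℝ) / n = (2 * B.card) / (2 * n) := by
        rw [mul_div_mul_left _ _ (by norm_num)]
      rw [e]
      gcongr
      have : sV ≤ 2 * B.card := by omega
      exact_mod_cast this
    exact pow_le_pow_left₀ (by linarith) (by linarith) _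
  · intro ω' h' x hx hy
    have hxm := Finset.mem_filter.1 hx
    refine h.fail_of (k' := k + 1) hs ω' h' _ (h2.1 (Finset.mem_filter.1 hy).1) ?_
    right
    exact ⟨x, i, h.ru ω' h' x (h1.1 hxm.1), fun hh => hxm.2 (h.hF hh), rfl⟩

lemma stageCD {F : Finset (Fin n × Fin d)} {u v : Fin n} {W : Finset (Fin n)} {k l s J2 J3 : ℕ}
    {ω : Cfg n d} {D : Finset (Fin n × Fin d)} {X Y S S' : Finset (Fin n)} (hd : 3 ≤ d)
    (h : St F u v W k l ω D X Y) (hs : k + J2 + 1 + (l + J3) ≤ s)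
    (h1 : Fr D X S) (h2 : Fr D Y S')
    {Z σ x1 x2 B : ℕ} (hU : Z ≤ S.card) (hV : Z ≤ S'.card) (hU' : S.card ≤ σ)
    (hV' : S'.card ≤ σ) (hx : (X ∪ Y ∪ W).card ≤ x1)
    (hx2 : x1 + σ * GG d J2 + σ * GG d J3 ≤ x2) {p : ℝ} (hp0 : 0 ≤ p)
    (hp : (x2 : ℝ) ≤ p * ((n : ℝ) - x2 - 1)) {q : ℝ} (hq0 : 0 ≤ q)
    (hq : (1 - (((Z - B) * (d - 1) ^ J3 : ℕ) : ℝ) / (2 * n)) ^ (((Z - B) * (d - 1) ^ J2) / 4)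
      ≤ q) :
    PF (Fail F u v s) D ω
      (q + (1 / 2) ^ (B + 1) * (1 + p) ^ (σ * GG d J2 + σ * GG d J3)) := by
  have hdisj : ∀ ω, Fail F u v s ω → Disj ω := fun ω h => h.1
  have hc1 : 1 ≤ 1 + p := by linarith
  have h12 : (1 : ℝ) + p * (2 - 1) = 1 + p := by ring
  have key := phase (Fail := Fail F u v s) (F := F) (D0 := D) (ω00 := ω) (W := W) (Y := Y)
    (r := u) (kend := k + J2) (J := J2) hd (h.fail_of (by omega)) hdisj
    (p := p) (lam := 2) (A := (1 / 2) ^ (B + 1) * (1 + p) ^ (σ * GG d J3)) (q := q) hp0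
    (by norm_num) (by positivity) hq0 (x1 := x1 + σ * GG d J2) (smax := σ * (d - 1) ^ J2)
    (Z := Z) (b0 := 0) (hp_mono hp0 (by omega) hp) ?_ J2 0 k ω D X S 0 (by omega) rfl h.toLS h1
    (by simpa using hU) le_rfl ?_ (by gcongr)
  · refine key.mono ?_
    rw [h12, pow_zero, mul_one, pow_add (1 + p), mul_comm ((1 + p) ^ (σ * GG d J2)), mul_assoc]
    gcongr
  · intro ω1 D1 X1 S1 b hL hFr hS hb hxc hsm
    have hSt := h.next hL
    have hFrv : Fr D1 Y S' := h2.congr hL.hD0 hL.hDY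
    have key2 := phase (Fail := Fail F u v s) (F := F) (D0 := D1) (ω00 := ω1) (W := W) (Y := X1)
      (r := v) (kend := l + J3) (J := J3) hd (hSt.fail_of' (by omega)) hdisj
      (p := p) (lam := 2) (A := (1 / 2) ^ (B + 1)) (q := q) hp0
      (by norm_num) (by positivity) hq0 (x1 := x2) (smax := σ * (d - 1) ^ J3)
      (Z := Z) (b0 := b) hp ?_ J3 0 l ω1 D1 Y S' b (by omega) rfl hSt.symm.toLS hFrv
      (by simp only [pow_zero, mul_one]; omega) le_rfl ?_ (by gcongr)
    · refine key2.mono ?_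
      rw [h12]
      have : (1 + p) ^ (S'.card * GG d J3) ≤ (1 + p) ^ (σ * GG d J3) :=
        pow_le_pow_right₀ hc1 (by gcongr)
      have h3 : (0 : ℝ) ≤ (1 / 2) ^ (B + 1) * 2 ^ b := by positivity
      nlinarith [mul_le_mul_of_nonneg_left this h3]
    · intro ω2 D2 Y2 S2 b2 hL2 hFr2 hS2 hb2 hxc2 hsm2
      have hSt2 := (hSt.symm.next hL2).symm
      have hFru : Fr D2 X1 S1 := hFr.congr hL2.hD0 hL2.hDY
      by_cases hB : B + 1 ≤ b2
      · refine PF_one.mono ?_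
        have : (1 : ℝ) ≤ (1 / 2) ^ (B + 1) * 2 ^ b2 := by
          calc (1 : ℝ) = (1 / 2) ^ (B + 1) * 2 ^ (B + 1) := by
                rw [← mul_pow]; norm_num
            _ ≤ _ := by gcongr; norm_num
        linarith
      · have e1 : (Z - B) * (d - 1) ^ J2 ≤ S1.card := by
          rw [Nat.sub_mul]
          have : b * (d - 1) ^ J2 ≤ B * (d - 1) ^ J2 := by gcongr; omega
          omega
        have e2 : (Z - B) * (d - 1) ^ J3 ≤ S2.card := by
          rw [Nat.sub_mul]
          have : b2 * (d - 1) ^ J3 ≤ B * (d - 1) ^ J3 := by gcongr; omega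
          omega
        refine (endE hd hSt2 (by omega) hFru hFr2 e1 e2).mono ?_
        have : (0 : ℝ) ≤ (1 / 2) ^ (B + 1) * 2 ^ b2 := by positivity
        linarith
    · rw [Finset.union_comm Y X1]
      have : S'.card * GG d J3 ≤ σ * GG d J3 := by gcongr
      omega
  · have : S.card * GG d J2 ≤ σ * GG d J2 := by gcongr
    omega

/-- main bound for a pair of vertices -/
lemma pair_bound {F : Finset (Fin n × Fin d)} {u v : Fin n} {s J J2 J3 : ℕ}
    {ω : Cfg n d} (hd : 3 ≤ d) (huv : u ≠ v) (hω : IsCfg ω) (hF : Closed F ω)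
    (hgood : ∀ x i j, (x, i) ∈ F → (x, j) ∈ F → i = j)
    (hs : J + 1 + J2 + 1 + (J + 1 + J3) ≤ s)
    {x1 x2 B f : ℕ} (hW : F.card ≤ f)
    (hx1 : 2 + f + 2 * (d * (1 + GG d J)) ≤ x1)
    (hx2 : x1 + d * (d - 1) ^ J * GG d J2 + d * (d - 1) ^ J * GG d J3 ≤ x2)
    {p1 p2 lam q : ℝ} (hp1 : 0 ≤ p1) (hp2 : 0 ≤ p2) (hlam : 1 ≤ lam)
    (hp1' : (x1 : ℝ) ≤ p1 * ((n : ℝ) - x1 - 1))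
    (hp2' : (x2 : ℝ) ≤ p2 * ((n : ℝ) - x2 - 1)) (hq0 : 0 ≤ q)
    (hq : (1 - ((((d - 1) ^ J - B) * (d - 1) ^ J3 : ℕ) : ℝ) / (2 * n)) ^
      ((((d - 1) ^ J - B) * (d - 1) ^ J2) / 4) ≤ q) :
    PF (Fail F u v s) F ω
      (q + (1 / 2) ^ (B + 1) *
          (1 + p2) ^ (d * (d - 1) ^ J * GG d J2 + d * (d - 1) ^ J * GG d J3)
        + (lam ^ 3)⁻¹ * (1 + p1 * (lam - 1)) ^ (2 * (d * (1 + GG d J))) *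
          lam ^ ((if ∃ i, (u, i) ∈ F then 1 else 0) + (if ∃ i, (v, i) ∈ F then 1 else 0))) := by
  classical
  have hdisj : ∀ ω, Fail F u v s ω → Disj ω := fun ω h => h.1
  set q2 := q + (1 / 2) ^ (B + 1) *
          (1 + p2) ^ (d * (d - 1) ^ J * GG d J2 + d * (d - 1) ^ J * GG d J3) with hq2
  have hq20 : 0 ≤ q2 := by positivity
  set c := 1 + p1 * (lam - 1) with hc
  have hc1 : 1 ≤ c := by
    have := mul_nonneg hp1 (sub_nonneg.2 hlam)
    linarith
  set T := d * (1 + GG d J) with hT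
  set wu : ℕ := if ∃ i, (u, i) ∈ F then 1 else 0 with hwu
  set wv : ℕ := if ∃ i, (v, i) ∈ F then 1 else 0 with hwv
  set W := F.image Prod.fst with hWd
  have hWf : W.card ≤ f := Finset.card_image_le.trans hW
  have hfree : ∀ x : Fin n, 3 ≤ ((Finset.univ : Finset (Fin d)).filter
      (fun j => (x, j) ∉ F)).card + (if ∃ i, (x, i) ∈ F then 1 else 0) := by
    intro x
    have e := Finset.card_filter_add_card_filter_not (s := (Finset.univ : Finset (Fin d)))
      (fun j => (x, j) ∈ F)
    rw [Finset.card_univ, Fintype.card_fin] at e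
    split_ifs with hx
    · have : ((Finset.univ : Finset (Fin d)).filter (fun j => (x, j) ∈ F)).card ≤ 1 := by
        rw [Finset.card_le_one]
        intro a ha b hb
        exact hgood x a b (Finset.mem_filter.1 ha).2 (Finset.mem_filter.1 hb).2
      omega
    · have : ((Finset.univ : Finset (Fin d)).filter (fun j => (x, j) ∈ F)).card = 0 := by
        rw [Finset.card_eq_zero, Finset.filter_eq_empty_iff]
        intro j _ hj
        exact hx ⟨j, hj⟩
      omega
  have hSt0 : St F u v W 0 0 ω F {u} {v} :=
    { cfg := hω, cl := hF, clF := hF, hF := subset_rfl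
      hD := fun p hp => Finset.mem_union_right _ (Finset.mem_image_of_mem _ hp)
      hXY := by simpa using huv
      ru := fun _ _ _ hx => Finset.mem_singleton.1 hx
      rv := fun _ _ _ hx => Finset.mem_singleton.1 hx }
  have hlam0 : 0 < lam := by linarith
  have key := grow_root (Fail := Fail F u v s) (F := F) (D0 := F) (ω00 := ω) (W := W) (Y := {v})
    (r := u) (J := J) hd (hSt0.fail_of (by omega)) hdisj (p := p1) (lam := lam)
    (A := (lam ^ 3)⁻¹ * c ^ T * lam ^ wv) (q := q2) hp1 hlam (by positivity) hq20
    (x1 := 2 + f + T) (b0 := wu) (hp_mono hp1 (by omega) hp1') ?_ (b := wu) hSt0.toLS le_rfl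
    (hfree u) ?_
  · refine key.mono (le_of_eq ?_)
    rw [← hc, pow_add lam, show 2 * T = T + T by ring, pow_add c]
    ring
  · intro ω1 D1 X1 S1 b hL hFr hS hb hxc hsm
    have hSt := hSt0.next hL
    have hvX : v ∉ X1 := by
      have := hL.hXY
      simpa using this
    have hDv : ∀ j, (v, j) ∈ D1 → (v, j) ∈ F := hL.hDY v (by simp)
    have key2 := grow_root (Fail := Fail F u v s) (F := F) (D0 := D1) (ω00 := ω1) (W := W)
      (Y := X1) (r := v) (J := J) hd (hSt.fail_of' (by omega)) hdisj (p := p1) (lam := lam)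
      (A := (lam ^ 3)⁻¹) (q := q2) hp1 hlam (by positivity) hq20
      (x1 := x1) (b0 := b) hp1' ?_ (b := b + wv) hSt.symm.toLS (by omega) ?_ ?_
    · refine key2.mono (le_of_eq ?_)
      rw [← hc, pow_add lam]
      ring
    · intro ω2 D2 Y2 S2 b2 hL2 hFr2 hS2 hb2 hxc2 hsm2
      have hSt2 := (hSt.symm.next hL2).symm
      have hFru : Fr D2 X1 S1 := hFr.congr hL2.hD0 hL2.hDY
      by_cases hB : 3 ≤ b2
      · refine PF_one.mono ?_
        have : (1 : ℝ) ≤ (lam ^ 3)⁻¹ * lam ^ b2 := by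
          calc (1 : ℝ) = (lam ^ 3)⁻¹ * lam ^ 3 := by
                rw [inv_mul_cancel₀ (by positivity)]
            _ ≤ _ := by gcongr
        linarith
      · have e1 : (d - 1) ^ J ≤ S1.card := by
          have : b * (d - 1) ^ J ≤ 2 * (d - 1) ^ J := by gcongr; omega
          omega
        have e2 : (d - 1) ^ J ≤ S2.card := by
          have : b2 * (d - 1) ^ J ≤ 2 * (d - 1) ^ J := by gcongr; omega
          omega
        have := stageCD (B := B) hd hSt2 (J2 := J2) (J3 := J3) (by omega) hFru hFr2 e1 e2 hsm hsm2
          (by rw [Finset.union_comm X1 Y2]; exact hxc2) hx2 hp2 hp2' hq0 hq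
        refine this.mono ?_
        have : (0 : ℝ) ≤ (lam ^ 3)⁻¹ * lam ^ b2 := by positivity
        linarith
    · have h3 := hfree v
      have : ((Finset.univ : Finset (Fin d)).filter (fun j => (v, j) ∉ F)).card ≤
          ((Finset.univ : Finset (Fin d)).filter (fun j => (v, j) ∉ D1)).card := by
        refine Finset.card_le_card (fun j hj => ?_)
        rw [Finset.mem_filter] at hj ⊢
        exact ⟨hj.1, fun hh => hj.2 (hDv j hh)⟩
      omega
    · rw [Finset.union_comm {v} X1]
      omega
  · have h1 := Finset.card_union_le ({u} ∪ {v}) W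
    have h2 := Finset.card_union_le ({u} : Finset (Fin n)) {v}
    simp only [Finset.card_singleton] at h2
    omega

end RD

open Filter Asymptotics

namespace RD
variable {n d : ℕ}

open Classical in
/-- half-edges that lie on a multiple edge -/
noncomputable def bad (ω : Cfg n d) : Finset (Fin n × Fin d) :=
  Finset.univ.filter fun p => ∃ j, j ≠ p.2 ∧ ω j p.1 = ω p.2 p.1

lemma mem_bad {ω : Cfg n d} {x : Fin n} {i : Fin d} :
    (x, i) ∈ bad ω ↔ ∃ j, j ≠ i ∧ ω j x = ω i x := by
  simp [bad]

lemma disj_iff_bad {ω : Cfg n d} : Disj ω ↔ bad ω = ∅ := by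
  rw [Finset.eq_empty_iff_forall_notMem]
  constructor
  · rintro h ⟨x, i⟩ hx
    obtain ⟨j, hj, e⟩ := mem_bad.1 hx
    exact h j i x hj e
  · intro h i j x hij e
    exact h (x, j) (mem_bad.2 ⟨i, hij, e⟩)

lemma sw_key {ω : Cfg n d} (hω : IsCfg ω) {i : Fin d} {x z : Fin n}
    (hzx : z ≠ x) (h1 : ∀ j, z ≠ ω j x) (h2 : ∀ j, ω i z ≠ ω j (ω i x)) {a : Fin n} {k : Fin d}
    (h : sw ω i (ω i x) z i a = ω k a) : ω i a = ω k a ∧ a ≠ x := by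
  set y := ω i x with hy
  have hyx : y ≠ x := (hω i x).2
  have hiy : ω i y = x := (hω i x).1
  have hzy : z ≠ y := h1 i
  rw [sw_same] at h
  by_cases hay : a = y
  · subst hay
    rw [Equiv.swap_apply_left] at h
    have : ω i z ≠ y := by
      intro hh
      have := (hω i z).1
      rw [hh, hiy] at this
      exact hzx this.symm
    rw [Equiv.swap_apply_of_ne_of_ne this (hω i z).2] at h
    exact absurd h (h2 k)
  by_cases haz : a = z
  · subst haz
    rw [Equiv.swap_apply_right, hiy, Equiv.swap_apply_of_ne_of_ne hyx.symm hzx.symm] at h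
    refine absurd ?_ (h1 k)
    rw [h, (hω k a).1]
  rw [Equiv.swap_apply_of_ne_of_ne hay haz] at h
  by_cases hax : a = x
  · subst hax
    rw [← hy, Equiv.swap_apply_left] at h
    exact absurd h (h1 k)
  have e1 : ω i a ≠ y := by
    intro hh
    apply hax
    rw [← (hω i a).1, hh, hiy]
  by_cases e2 : ω i a = z
  · rw [e2, Equiv.swap_apply_right] at h
    refine absurd ?_ (h2 k)
    rw [h, (hω k a).1, ← e2, (hω i a).1]
  rw [Equiv.swap_apply_of_ne_of_ne e1 e2] at h
  exact ⟨h, hax⟩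

lemma bad_sw {ω : Cfg n d} (hω : IsCfg ω) {i : Fin d} {x z : Fin n} (hb : (x, i) ∈ bad ω)
    (hzx : z ≠ x) (h1 : ∀ j, z ≠ ω j x) (h2 : ∀ j, ω i z ≠ ω j (ω i x)) :
    (bad (sw ω i (ω i x) z)).card < (bad ω).card := by
  apply Finset.card_lt_card
  rw [Finset.ssubset_iff_of_subset]
  · refine ⟨(x, i), hb, fun h => ?_⟩
    obtain ⟨j, hj, e⟩ := mem_bad.1 h
    rw [sw_ne _ hj] at e
    exact (sw_key hω hzx h1 h2 e.symm).2 rfl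
  · rintro ⟨a, k⟩ h
    obtain ⟨j, hj, e⟩ := mem_bad.1 h
    rw [mem_bad]
    by_cases hk : k = i
    · subst hk
      rw [sw_ne _ hj] at e
      exact ⟨j, hj, (sw_key hω hzx h1 h2 e.symm).1.symm⟩
    · rw [sw_ne _ hk] at e
      by_cases hj' : j = i
      · subst hj'
        exact ⟨j, hj, (sw_key hω hzx h1 h2 e).1⟩
      · rw [sw_ne _ hj'] at e
        exact ⟨j, hj, e⟩

open Classical in
noncomputable def Om (n d : ℕ) : Finset (Cfg n d) := Finset.univ.filter IsCfg

lemma mem_Om {ω : Cfg n d} : ω ∈ Om n d ↔ IsCfg ω := by simp [Om]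

lemma cyl_empty (ω0 : Cfg n d) : cyl ∅ ω0 = Om n d := by
  ext ω; simp [mem_cyl, mem_Om]

noncomputable def At (n d t : ℕ) : Finset (Cfg n d) := (Om n d).filter fun ω => (bad ω).card ≤ t

lemma At_succ (t : ℕ) (hn : 2 + 4 * d ≤ n) :
    (At n d (t + 1)).card ≤ (1 + 2 * d ^ 2) * (At n d t).card := by
  classical
  set r : Cfg n d → Cfg n d → Prop :=
    fun ω ω' => ∃ (x : Fin n) (i j : Fin d), ω = sw ω' i (ω' j x) (ω' i x) with hr
  have hsub : At n d t ⊆ At n d (t + 1) := by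
    intro ω h
    rw [At, Finset.mem_filter] at h ⊢
    exact ⟨h.1, by omega⟩
  have key := Finset.card_mul_le_card_mul (s := At n d (t + 1) \ At n d t) (t := At n d t) r
    (m := n - 1 - 2 * d) (n := n * d * d) ?_ ?_
  · have h1 : (At n d (t + 1)).card = (At n d (t + 1) \ At n d t).card + (At n d t).card :=
      (Finset.card_sdiff_add_card_eq_card hsub).symm
    set a := (At n d (t + 1) \ At n d t).card
    set b := (At n d t).card
    have h2 : n ≤ 2 * (n - 1 - 2 * d) := by omega
    have hpos : 0 < n := by omega
    have h3 : a * n ≤ 2 * d ^ 2 * b * n := by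
      calc a * n ≤ a * (2 * (n - 1 - 2 * d)) := by gcongr
        _ = 2 * (a * (n - 1 - 2 * d)) := by ring
        _ ≤ 2 * (b * (n * d * d)) := by gcongr
        _ = _ := by ring
    have h4 := Nat.le_of_mul_le_mul_right h3 hpos
    rw [h1]
    nlinarith
  · intro ω hω
    rw [Finset.mem_sdiff, At, At, Finset.mem_filter, Finset.mem_filter] at hω
    obtain ⟨⟨hωm, hb⟩, hb'⟩ := hω
    have hcfg := mem_Om.1 hωm
    have hbne : (bad ω).Nonempty := by
      rw [← Finset.card_pos]
      by_contra h
      exact hb' ⟨hωm, by omega⟩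
    obtain ⟨⟨x, i⟩, hx⟩ := hbne
    set V : Finset (Fin n) := insert x (Finset.univ.image (fun j => ω j x) ∪
      Finset.univ.image (fun j => ω i (ω j (ω i x)))) with hV
    have hVc : V.card ≤ 1 + 2 * d := by
      have h1 := Finset.card_insert_le x (Finset.univ.image (fun j => ω j x) ∪
        Finset.univ.image (fun j => ω i (ω j (ω i x))))
      have h2 := Finset.card_union_le (Finset.univ.image (fun j => ω j x))
        (Finset.univ.image (fun j => ω i (ω j (ω i x))))
      have h3 := Finset.card_image_le (s := Finset.univ) (f := fun j => ω j x)
      have h4 := Finset.card_image_le (s := Finset.univ) (f := fun j => ω i (ω j (ω i x)))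
      rw [Finset.card_univ, Fintype.card_fin] at h3 h4
      rw [hV]
      omega
    have hVC : n - 1 - 2 * d ≤ Vᶜ.card := by
      rw [Finset.card_compl, Fintype.card_fin]; omega
    refine hVC.trans ?_
    have hz : ∀ z ∈ Vᶜ, z ≠ x ∧ (∀ j, z ≠ ω j x) ∧ (∀ j, ω i z ≠ ω j (ω i x)) := by
      intro z hz
      simp only [hV, Finset.mem_compl, Finset.mem_insert, Finset.mem_union, Finset.mem_image,
        Finset.mem_univ, true_and, not_or, not_exists] at hz
      refine ⟨hz.1, fun j h => hz.2.1 j h.symm, fun j h => hz.2.2 j ?_⟩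
      rw [← h, (hcfg i z).1]
    have hval : ∀ z ∈ Vᶜ, sw ω i (ω i x) z i x = z := by
      intro z hzz
      rw [sw_same, Equiv.swap_apply_of_ne_of_ne (hcfg i x).2.symm (hz z hzz).1.symm,
        Equiv.swap_apply_left]
    refine Finset.card_le_card_of_injOn (fun z => sw ω i (ω i x) z) ?_ ?_
    · intro z hzz
      have hzz' : z ∈ Vᶜ := by exact_mod_cast hzz
      obtain ⟨z1, z2, z3⟩ := hz z hzz'
      simp only [Finset.bipartiteAbove, Finset.coe_filter, Set.mem_ofPred_eq]
      refine ⟨?_, ?_⟩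
      · rw [At, Finset.mem_filter, mem_Om]
        refine ⟨isCfg_sw hcfg _ _ _, ?_⟩
        have := bad_sw hcfg hx z1 z2 z3
        omega
      · obtain ⟨j, hj, e⟩ := mem_bad.1 hx
        refine ⟨x, i, j, ?_⟩
        rw [hval z hzz', sw_ne _ hj, e, sw_sw]
    · intro z hz1 z' hz2 h
      have h1 : z ∈ Vᶜ := by exact_mod_cast hz1
      have h2 : z' ∈ Vᶜ := by exact_mod_cast hz2
      have h3 := hval z h1
      have h4 := hval z' h2
      simp only at h
      rw [h] at h3
      exact h3.symm.trans h4
  · intro ω' _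
    have : Finset.bipartiteBelow r (At n d (t + 1) \ At n d t) ω' ⊆
        (Finset.univ : Finset (Fin n × Fin d × Fin d)).image
          (fun p => sw ω' p.2.1 (ω' p.2.2 p.1) (ω' p.2.1 p.1)) := by
      intro ω h
      simp only [Finset.bipartiteBelow, Finset.mem_filter] at h
      obtain ⟨x, i, j, e⟩ := h.2
      rw [Finset.mem_image]
      exact ⟨(x, i, j), Finset.mem_univ _, e.symm⟩
    refine (Finset.card_le_card this).trans (Finset.card_image_le.trans ?_)
    simp [mul_assoc]

lemma pair_coinc (hn : 2 ≤ n) {i j : Fin d} (hij : i ≠ j) (x : Fin n) (ω0 : Cfg n d) :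
    PF (fun ω => ω j x = ω i x) ∅ ω0 (1 / ((n : ℝ) - 1)) := by
  classical
  have h0 : Closed (∅ : Finset (Fin n × Fin d)) ω0 := by intro p hp; simp at hp
  have hn1 : (0 : ℝ) < (n : ℝ) - 1 := by
    have : (2 : ℝ) ≤ n := by exact_mod_cast hn
    linarith
  have key := step (Fail := fun ω => ω j x = ω i x) h0 (x := x) (i := j) (by simp) Finset.univ 1
    (1 / ((n : ℝ) - 1)) (1 / ((n : ℝ) - 1)) le_rfl (by simp) ?_ ?_
  · simpa using key
  · intro ω _ h; simp at h
  · intro ω hω _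
    have hcfg := (mem_cyl.1 hω).1
    have hcl : Closed (ext ∅ ω x j) ω := closed_ext hcfg (by intro p hp; simp at hp) x j
    have hnot : ∀ y, (y, i) ∉ ext ∅ ω x j := by
      intro y hy
      rcases mem_ext.1 hy with h | h | h
      · exact hij (Prod.mk.inj h).2
      · exact hij (Prod.mk.inj h).2
      · simp at h
    have hfre : fre (ext ∅ ω x j) x i = Finset.univ.erase x := by
      ext y
      simp [fre, hnot]
    have hc : ((fre (ext ∅ ω x j) x i).card : ℝ) = (n : ℝ) - 1 := by
      rw [hfre, Finset.card_erase_of_mem (Finset.mem_univ _), Finset.card_univ, Fintype.card_fin,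
        Nat.cast_sub (by omega)]
      simp
    have k2 := step (Fail := fun ω => ω j x = ω i x) hcl (x := x) (i := i) (hnot x) {ω j x}
      (1 / ((n : ℝ) - 1)) 0 1 zero_le_one ?_ ?_ ?_
    · simpa using k2
    · rw [hc, div_mul_cancel₀ _ hn1.ne']
      have : (fre (ext ∅ ω x j) x i ∩ {ω j x}).card ≤ 1 :=
        (Finset.card_le_card Finset.inter_subset_right).trans (by simp)
      exact_mod_cast this
    · intro ω1 h1 hb
      refine PF_zero ?_
      intro ω2 h2 e
      apply hb
      rw [Finset.mem_singleton]
      have a1 := (mem_cyl.1 h2).2 (x, i) (mem_ext.2 (Or.inl rfl))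
      have a2 := (mem_cyl.1 h2).2 (x, j) (mem_ext.2 (Or.inr (Or.inr (mem_ext.2 (Or.inl rfl)))))
      have a3 := (mem_cyl.1 h1).2 (x, j) (mem_ext.2 (Or.inl rfl))
      simp only at a1 a2 a3
      rw [← a1, ← a3, ← a2, e]
    · intro ω1 h1 hb
      exact PF_one

lemma markov (hn : 2 ≤ n) (hd : 1 ≤ d) : (Om n d).card ≤ 2 * (At n d (4 * d ^ 2)).card := by
  classical
  have hn1 : (0 : ℝ) < (n : ℝ) - 1 := by
    have : (2 : ℝ) ≤ n := by exact_mod_cast hn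
    linarith
  have hsum : (∑ ω ∈ Om n d, ((bad ω).card : ℝ)) ≤ 2 * d ^ 2 * (Om n d).card := by
    have h1 : ∀ ω : Cfg n d, ((bad ω).card : ℝ) ≤
        ∑ p : Fin n × Fin d × Fin d, if p.2.1 ≠ p.2.2 ∧ ω p.2.2 p.1 = ω p.2.1 p.1 then (1 : ℝ)
          else 0 := by
      intro ω
      rw [Finset.sum_boole]
      norm_cast
      have : bad ω ⊆ (Finset.univ.filter (fun p : Fin n × Fin d × Fin d =>
          p.2.1 ≠ p.2.2 ∧ ω p.2.2 p.1 = ω p.2.1 p.1)).image (fun p => (p.1, p.2.1)) := by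
        rintro ⟨x, i⟩ h
        obtain ⟨j, hj, e⟩ := mem_bad.1 h
        rw [Finset.mem_image]
        refine ⟨(x, i, j), ?_, rfl⟩
        simp [hj.symm, e]
      exact (Finset.card_le_card this).trans Finset.card_image_le
    calc (∑ ω ∈ Om n d, ((bad ω).card : ℝ)) ≤ _ := Finset.sum_le_sum (fun ω _ => h1 ω)
      _ = ∑ p : Fin n × Fin d × Fin d, ∑ ω ∈ Om n d,
          if p.2.1 ≠ p.2.2 ∧ ω p.2.2 p.1 = ω p.2.1 p.1 then (1 : ℝ) else 0 := Finset.sum_comm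
      _ ≤ ∑ p : Fin n × Fin d × Fin d, 1 / ((n : ℝ) - 1) * (Om n d).card := by
          refine Finset.sum_le_sum (fun p _ => ?_)
          rw [Finset.sum_boole]
          by_cases hp : p.2.1 = p.2.2
          · simp only [hp, ne_eq, not_true_eq_false, false_and, Finset.filter_false,
              Finset.card_empty, Nat.cast_zero]
            positivity
          · have := pair_coinc hn hp p.1 (fun _ x => x)
            unfold PF at this
            rw [cyl_empty] at this
            simp only [ne_eq, hp, not_false_eq_true, true_and]
            refine le_trans (le_of_eq ?_) this
            congr 2
            ext ω; simp only [Finset.mem_filter]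
      _ = (n : ℝ) / ((n : ℝ) - 1) * d ^ 2 * (Om n d).card := by
          rw [Finset.sum_const, Finset.card_univ]
          simp only [Fintype.card_prod, Fintype.card_fin, nsmul_eq_mul]
          push_cast
          ring
      _ ≤ 2 * d ^ 2 * (Om n d).card := by
          gcongr
          rw [div_le_iff₀ hn1]
          have : (2 : ℝ) ≤ n := by exact_mod_cast hn
          linarith
  have hpart := Finset.card_filter_add_card_filter_not (s := Om n d)
      (fun ω => (bad ω).card ≤ 4 * d ^ 2)
  have hA : (Om n d).filter (fun ω => (bad ω).card ≤ 4 * d ^ 2) = At n d (4 * d ^ 2) := rfl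
  rw [hA] at hpart
  set Nn := (Om n d).filter (fun ω => ¬ (bad ω).card ≤ 4 * d ^ 2) with hNn
  have h2 : (Nn.card : ℝ) * (4 * d ^ 2) ≤ ∑ ω ∈ Om n d, ((bad ω).card : ℝ) := by
    calc (Nn.card : ℝ) * (4 * d ^ 2) = ∑ ω ∈ Nn, (4 * (d : ℝ) ^ 2) := by simp
      _ ≤ ∑ ω ∈ Nn, ((bad ω).card : ℝ) := by
          refine Finset.sum_le_sum (fun ω hω => ?_)
          have := (Finset.mem_filter.1 hω).2
          have h : 4 * d ^ 2 ≤ (bad ω).card := by omega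
          exact_mod_cast h
      _ ≤ _ := Finset.sum_le_sum_of_subset_of_nonneg (Finset.filter_subset _ _)
          (fun _ _ _ => by positivity)
  have h3 : (Nn.card : ℝ) * (4 * d ^ 2) ≤ 2 * d ^ 2 * (Om n d).card := h2.trans hsum
  have h4 : 2 * Nn.card * (2 * d ^ 2) ≤ (Om n d).card * (2 * d ^ 2) := by
    have : 2 * (Nn.card : ℝ) * (2 * d ^ 2) ≤ (Om n d).card * (2 * d ^ 2) := by linarith
    exact_mod_cast this
  have h5 := Nat.le_of_mul_le_mul_right h4 (by positivity)
  omega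

/-- a positive proportion of the configurations are simple -/
lemma disj_prop (hd : 1 ≤ d) (hn : 2 + 4 * d ≤ n) :
    (Om n d).card ≤ 2 * (1 + 2 * d ^ 2) ^ (4 * d ^ 2) * (At n d 0).card := by
  have h : ∀ t, (At n d t).card ≤ (1 + 2 * d ^ 2) ^ t * (At n d 0).card := by
    intro t
    induction t with
    | zero => simp
    | succ t ih =>
      refine (At_succ t hn).trans ?_
      rw [pow_succ]
      calc _ ≤ (1 + 2 * d ^ 2) * ((1 + 2 * d ^ 2) ^ t * (At n d 0).card) :=
            Nat.mul_le_mul_left _ ih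
        _ = _ := by ring
  have h1 := markov (n := n) (d := d) (by omega) hd
  have h2 := h (4 * d ^ 2)
  calc _ ≤ 2 * (At n d (4 * d ^ 2)).card := h1
    _ ≤ 2 * ((1 + 2 * d ^ 2) ^ (4 * d ^ 2) * (At n d 0).card) := by gcongr
    _ = _ := by ring

lemma mem_At_zero {ω : Cfg n d} : ω ∈ At n d 0 ↔ IsCfg ω ∧ Disj ω := by
  rw [At, Finset.mem_filter, mem_Om, disj_iff_bad, Nat.le_zero, Finset.card_eq_zero]

end RD

open Filter Asymptotics

namespace RD
variable {n d : ℕ}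

/-- one half-edge for each edge -/
def Tr (ω : Cfg n d) : Finset (Fin n × Fin d) := Finset.univ.filter fun p => p.1 < ω p.2 p.1

def tau (ω : Cfg n d) (p : Fin n × Fin d) : Fin n × Fin d := (ω p.2 p.1, p.2)

/-- all half-edges of the labelled edges in `E` -/
def DE (ω : Cfg n d) (E : Finset (Fin n × Fin d)) : Finset (Fin n × Fin d) := E ∪ E.image (tau ω)

/-- the graph of colour `i` -/
def Gr (ω : Cfg n d) (i : Fin d) : SimpleGraph (Fin n) :=
  SimpleGraph.fromRel (fun x y => ω i x = y)

def ed (ω : Cfg n d) (p : Fin n × Fin d) : Sym2 (Fin n) := s(p.1, ω p.2 p.1)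

lemma mem_Tr {ω : Cfg n d} {p : Fin n × Fin d} : p ∈ Tr ω ↔ p.1 < ω p.2 p.1 := by simp [Tr]

lemma tau_tau {ω : Cfg n d} (h : IsCfg ω) (p : Fin n × Fin d) : tau ω (tau ω p) = p := by
  simp [tau, (h p.2 p.1).1]

lemma Gr_adj {ω : Cfg n d} (h : IsCfg ω) {i : Fin d} {x y : Fin n} :
    (Gr ω i).Adj x y ↔ ω i x = y := by
  rw [Gr, SimpleGraph.fromRel_adj]
  constructor
  · rintro ⟨_, h1 | h1⟩
    · exact h1
    · rw [← h1, (h i y).1]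
  · intro h1
    exact ⟨fun e => (h i x).2 (h1.trans e.symm), Or.inl h1⟩

lemma Tr_card {ω : Cfg n d} (h : IsCfg ω) : 2 * (Tr ω).card = n * d := by
  have h1 := Finset.card_filter_add_card_filter_not (s := (Finset.univ : Finset (Fin n × Fin d)))
    (fun p => p.1 < ω p.2 p.1)
  have h2 : (Finset.univ.filter (fun p : Fin n × Fin d => ¬ p.1 < ω p.2 p.1)).card
      = (Tr ω).card := by
    refine Finset.card_bij' (fun p _ => tau ω p) (fun p _ => tau ω p) ?_ ?_ ?_ ?_
    · intro p hp
      simp only [Finset.mem_filter, Finset.mem_univ, true_and, not_lt] at hp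
      rw [mem_Tr]
      simp only [tau, (h p.2 p.1).1]
      exact lt_of_le_of_ne hp (h p.2 p.1).2
    · intro p hp
      rw [mem_Tr] at hp
      simp only [Finset.mem_filter, Finset.mem_univ, true_and, not_lt]
      simp only [tau, (h p.2 p.1).1]
      exact hp.le
    · intro p _; exact tau_tau h p
    · intro p _; exact tau_tau h p
  rw [h2, Finset.card_univ, Fintype.card_prod, Fintype.card_fin, Fintype.card_fin] at h1
  have h3 : (Finset.univ.filter (fun p : Fin n × Fin d => p.1 < ω p.2 p.1)).card
      = (Tr ω).card := rfl
  omega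

lemma ed_inj {ω : Cfg n d} (h : IsCfg ω) (hdj : Disj ω) :
    Set.InjOn (ed ω) (Tr ω : Set (Fin n × Fin d)) := by
  rintro ⟨x, i⟩ hx ⟨y, j⟩ hy e
  have hx' : x < ω i x := mem_Tr.1 (Finset.mem_coe.1 hx)
  have hy' : y < ω j y := mem_Tr.1 (Finset.mem_coe.1 hy)
  rcases Sym2.eq_iff.1 e with ⟨h1, h2⟩ | ⟨h1, h2⟩
  · simp only at h1 h2
    subst h1
    by_cases hij : i = j
    · rw [hij]
    · exact absurd h2 (hdj i j x hij)
  · simp only at h1 h2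
    rw [h2, h1] at hx'
    exact absurd hx' (not_lt.2 hy'.le)

lemma ed_edge {ω : Cfg n d} (h : IsCfg ω) (p : Fin n × Fin d) :
    ed ω p ∈ (⨆ i, Gr ω i).edgeSet := by
  rw [ed, SimpleGraph.mem_edgeSet, SimpleGraph.iSup_adj]
  exact ⟨p.2, (Gr_adj h).2 rfl⟩

lemma edge_ed {ω : Cfg n d} (h : IsCfg ω) {e : Sym2 (Fin n)}
    (he : e ∈ (⨆ i, Gr ω i).edgeSet) : ∃ p ∈ Tr ω, ed ω p = e := by
  induction e with
  | h x y =>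
    rw [SimpleGraph.mem_edgeSet, SimpleGraph.iSup_adj] at he
    obtain ⟨i, hi⟩ := he
    rw [Gr_adj h] at hi
    subst hi
    rcases lt_or_gt_of_ne (h i x).2.symm with h1 | h1
    · exact ⟨(x, i), mem_Tr.2 h1, rfl⟩
    · refine ⟨(ω i x, i), mem_Tr.2 ?_, ?_⟩
      · simp only [(h i x).1]; exact h1
      · simp only [ed, (h i x).1]; exact Sym2.eq_swap

lemma isPM {ω : Cfg n d} (h : IsCfg ω) (hdj : Disj ω) : IsPMTuple (Gr ω) := by
  constructor
  · intro i v
    have : (Gr ω i).neighborSet v = {ω i v} := by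
      ext w
      rw [SimpleGraph.mem_neighborSet, Gr_adj h, Set.mem_singleton_iff, eq_comm]
    rw [this]
    simp
  · intro i j hij
    rw [SimpleGraph.disjoint_left]
    intro x y h1 h2
    rw [Gr_adj h] at h1 h2
    exact hdj i j x hij (h1.trans h2.symm)

lemma of_isPM {M : Fin d → SimpleGraph (Fin n)} (hM : IsPMTuple M) :
    ∃ ω : Cfg n d, IsCfg ω ∧ Disj ω ∧ Gr ω = M := by
  have h1 : ∀ i v, ∃ w, ∀ x, (M i).Adj v x ↔ x = w := by
    intro i v
    obtain ⟨hs, ⟨w, hw⟩⟩ := Nat.card_eq_one_iff_unique.1 (hM.1 i v)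
    refine ⟨w, fun x => ⟨fun hx => ?_, fun hx => hx ▸ hw⟩⟩
    have := @Subsingleton.elim _ hs ⟨x, hx⟩ ⟨w, hw⟩
    exact congrArg Subtype.val this
  choose ω hω using h1
  have hadj : ∀ i v, (M i).Adj v (ω i v) := fun i v => (hω i v _).2 rfl
  have hc : IsCfg ω := by
    intro i x
    refine ⟨((hω i (ω i x) x).1 (hadj i x).symm).symm, (hadj i x).ne'⟩
  refine ⟨ω, hc, ?_, ?_⟩
  · intro i j x hij e
    have := SimpleGraph.disjoint_left.1 (hM.2 i j hij) x (ω i x) (hadj i x)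
    rw [e] at this
    exact this (hadj j x)
  · funext i
    ext x y
    rw [Gr_adj hc, hω, eq_comm]

open Classical in
lemma transfer (m : ℕ) (A : (Fin d → SimpleGraph (Fin n)) → Finset (Sym2 (Fin n)) → Prop) :
    (Finset.univ.filter
      (fun P : Cfg n d × Finset (Fin n × Fin d) =>
        (IsCfg P.1 ∧ Disj P.1) ∧ P.2 ∈ (Tr P.1).powersetCard m ∧
          A (Gr P.1) (P.2.image (ed P.1)))).card =
    (Finset.univ.filter
      (fun P : (Fin d → SimpleGraph (Fin n)) × Finset (Sym2 (Fin n)) =>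
        IsPMTuple P.1 ∧ (∀ e ∈ P.2, e ∈ (⨆ i, P.1 i).edgeSet) ∧ P.2.card = m ∧
          A P.1 P.2)).card := by
  refine Finset.card_bij (fun P _ => (Gr P.1, P.2.image (ed P.1))) ?_ ?_ ?_
  · rintro ⟨ω, E⟩ h
    simp only [Finset.mem_filter, Finset.mem_univ, true_and, Finset.mem_powersetCard] at h ⊢
    obtain ⟨⟨h1, h2⟩, ⟨h3, h4⟩, h5⟩ := h
    refine ⟨isPM h1 h2, ?_, ?_, h5⟩
    · intro e he
      obtain ⟨p, _, rfl⟩ := Finset.mem_image.1 he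
      exact ed_edge h1 p
    · rw [Finset.card_image_of_injOn ((ed_inj h1 h2).mono (by exact_mod_cast h3)), h4]
  · rintro ⟨ω, E⟩ h ⟨ω', E'⟩ h' e
    simp only [Finset.mem_filter, Finset.mem_univ, true_and, Finset.mem_powersetCard] at h h'
    obtain ⟨⟨h1, h2⟩, ⟨h3, h4⟩, h5⟩ := h
    obtain ⟨⟨h1', h2'⟩, ⟨h3', h4'⟩, h5'⟩ := h'
    obtain ⟨e1, e2⟩ := Prod.mk.inj e
    have : ω = ω' := by
      funext i x
      have : (Gr ω i).Adj x (ω i x) := (Gr_adj h1).2 rfl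
      rw [show Gr ω i = Gr ω' i from congrFun e1 i, Gr_adj h1'] at this
      exact this.symm
    subst this
    have key : ∀ {E1 E2 : Finset (Fin n × Fin d)}, E1 ⊆ Tr ω → E2 ⊆ Tr ω →
        E1.image (ed ω) = E2.image (ed ω) → E1 ⊆ E2 := by
      intro E1 E2 a1 a2 a3 p hp
      have : ed ω p ∈ E2.image (ed ω) := a3 ▸ Finset.mem_image_of_mem _ hp
      obtain ⟨q, hq, hqe⟩ := Finset.mem_image.1 this
      have := ed_inj h1 h2 (Finset.mem_coe.2 (a2 hq)) (Finset.mem_coe.2 (a1 hp)) hqe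
      exact this ▸ hq
    have : E = E' := Finset.Subset.antisymm (key h3 h3' e2) (key h3' h3 e2.symm)
    rw [this]
  · rintro ⟨M, F⟩ h
    simp only [Finset.mem_filter, Finset.mem_univ, true_and] at h
    obtain ⟨h1, h2, h3, h4⟩ := h
    obtain ⟨ω, w1, w2, rfl⟩ := of_isPM h1
    have hF : ((Tr ω).filter (fun p => ed ω p ∈ F)).image (ed ω) = F := by
      ext e
      rw [Finset.mem_image]
      constructor
      · rintro ⟨p, hp, rfl⟩
        exact (Finset.mem_filter.1 hp).2
      · intro he
        obtain ⟨p, hp, rfl⟩ := edge_ed w1 (h2 e he)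
        exact ⟨p, Finset.mem_filter.2 ⟨hp, he⟩, rfl⟩
    refine ⟨(ω, (Tr ω).filter (fun p => ed ω p ∈ F)), ?_, ?_⟩
    · simp only [Finset.mem_filter, Finset.mem_univ, true_and, Finset.mem_powersetCard]
      refine ⟨⟨w1, w2⟩, ⟨Finset.filter_subset _ _, ?_⟩, ?_⟩
      · rw [← h3, ← hF, Finset.card_image_of_injOn, hF]
        exact (ed_inj w1 w2).mono (by exact_mod_cast Finset.filter_subset _ _)
      · rw [hF]; exact h4
    · simp only [hF]

lemma mem_DE {ω : Cfg n d} {E : Finset (Fin n × Fin d)} (h : IsCfg ω) {p : Fin n × Fin d} :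
    p ∈ DE ω E ↔ p ∈ E ∨ tau ω p ∈ E := by
  rw [DE, Finset.mem_union, Finset.mem_image]
  constructor
  · rintro (h1 | ⟨q, hq, rfl⟩)
    · exact Or.inl h1
    · right; rwa [tau_tau h]
  · rintro (h1 | h1)
    · exact Or.inl h1
    · exact Or.inr ⟨_, h1, tau_tau h p⟩

lemma DE_closed {ω : Cfg n d} {E : Finset (Fin n × Fin d)} (h : IsCfg ω) :
    Closed (DE ω E) ω := by
  intro p hp
  change tau ω p ∈ DE ω E
  rw [mem_DE h] at hp ⊢
  rw [tau_tau h]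
  exact hp.symm

lemma DE_card {ω : Cfg n d} {E : Finset (Fin n × Fin d)} : (DE ω E).card ≤ 2 * E.card := by
  have h1 := Finset.card_union_le E (E.image (tau ω))
  have h2 := Finset.card_image_le (s := E) (f := tau ω)
  rw [DE]
  omega

/-- reachability gives walks -/
lemma Rch_walk {ω : Cfg n d} (h : IsCfg ω) (hdj : Disj ω) {E : Finset (Fin n × Fin d)}
    (hE : E ⊆ Tr ω) {u : Fin n} {k : ℕ} : ∀ {x : Fin n}, Rch (DE ω E) ω u k x →
    ∃ p : ((⨆ i, Gr ω i).deleteEdges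
      (↑(E.image (ed ω)) : Set (Sym2 (Fin n)))).Walk u x, p.length ≤ k := by
  induction k with
  | zero =>
    intro x hx
    have : x = u := hx
    subst this
    exact ⟨SimpleGraph.Walk.nil, le_rfl⟩
  | succ k ih =>
    rintro x (hx | ⟨y, i, hy, hyF, rfl⟩)
    · obtain ⟨p, hp⟩ := ih hx
      exact ⟨p, by omega⟩
    · obtain ⟨p, hp⟩ := ih hy
      have hadj : ((⨆ i, Gr ω i).deleteEdges
          (↑(E.image (ed ω)) : Set (Sym2 (Fin n)))).Adj y (ω i y) := by
        rw [SimpleGraph.deleteEdges_adj]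
        refine ⟨SimpleGraph.iSup_adj.2 ⟨i, (Gr_adj h).2 rfl⟩, fun hh => hyF ?_⟩
        rw [Finset.mem_coe, Finset.mem_image] at hh
        obtain ⟨q, hq, hqe⟩ := hh
        rw [mem_DE h]
        have aux : ∀ z, (z, i) ∈ Tr ω → ed ω (z, i) = ed ω q → (z, i) ∈ E := by
          intro z hz e
          have := ed_inj h hdj (Finset.mem_coe.2 hz) (Finset.mem_coe.2 (hE hq)) e
          rw [this]; exact hq
        rcases lt_or_gt_of_ne (h i y).2.symm with h1 | h1
        · left
          exact aux y (mem_Tr.2 h1) hqe.symm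
        · right
          refine aux (ω i y) (mem_Tr.2 ?_) ?_
          · simp only [(h i y).1]; exact h1
          · rw [hqe]
            simp only [ed, (h i y).1]; exact Sym2.eq_swap
      refine ⟨p.concat hadj, ?_⟩
      rw [SimpleGraph.Walk.length_concat]
      omega

lemma good_event {ω : Cfg n d} (hn : 0 < n) (h : IsCfg ω) (hdj : Disj ω)
    {E : Finset (Fin n × Fin d)} (hE : E ⊆ Tr ω) {s : ℕ}
    (hr : ∀ u v, u ≠ v → ¬ Fail (DE ω E) u v s ω) :
    ((⨆ i, Gr ω i).deleteEdges (↑(E.image (ed ω)) : Set (Sym2 (Fin n)))).Connected ∧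
      ∀ u v : Fin n, ((⨆ i, Gr ω i).deleteEdges
        (↑(E.image (ed ω)) : Set (Sym2 (Fin n)))).dist u v ≤ s := by
  have hw : ∀ u v : Fin n, ∃ p : ((⨆ i, Gr ω i).deleteEdges
      (↑(E.image (ed ω)) : Set (Sym2 (Fin n)))).Walk u v, p.length ≤ s := by
    intro u v
    by_cases huv : u = v
    · subst huv
      exact ⟨SimpleGraph.Walk.nil, Nat.zero_le _⟩
    · refine Rch_walk h hdj hE ?_
      by_contra hc
      exact hr u v huv ⟨hdj, hc⟩
  constructor
  · haveI : Nonempty (Fin n) := ⟨⟨0, hn⟩⟩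
    refine SimpleGraph.Connected.mk (fun u v => ?_)
    obtain ⟨p, _⟩ := hw u v
    exact ⟨p⟩
  · intro u v
    obtain ⟨p, hp⟩ := hw u v
    exact (SimpleGraph.dist_le p).trans hp

end RD

open Filter Asymptotics

namespace RD
variable {n d : ℕ}

def GoodE (ω : Cfg n d) (E : Finset (Fin n × Fin d)) : Prop :=
  ∀ x i j, (x, i) ∈ DE ω E → (x, j) ∈ DE ω E → i = j

lemma sum_le_of_fiber {α κ : Type*} [DecidableEq κ] (P : Finset α) (key : α → κ) (f g : α → ℝ)
    (h : ∀ a ∈ P, ∑ b ∈ P with key b = key a, f b ≤ ∑ b ∈ P with key b = key a, g b) :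
    ∑ b ∈ P, f b ≤ ∑ b ∈ P, g b := by
  rw [← Finset.sum_fiberwise_of_maps_to (t := P.image key) (g := key)
      (fun i hi => Finset.mem_image_of_mem _ hi) f,
    ← Finset.sum_fiberwise_of_maps_to (t := P.image key) (g := key)
      (fun i hi => Finset.mem_image_of_mem _ hi) g]
  refine Finset.sum_le_sum (fun k hk => ?_)
  obtain ⟨a, ha, rfl⟩ := Finset.mem_image.1 hk
  exact h a ha

open Classical in
lemma card_pairs {α β : Type*} [Fintype α] [Fintype β] (Q : α → Prop) (S : α → Finset β)
    (R : α → β → Prop) :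
    (Finset.univ.filter (fun P : α × β => Q P.1 ∧ P.2 ∈ S P.1 ∧ R P.1 P.2)).card =
      ∑ a ∈ Finset.univ.filter Q, ((S a).filter (R a)).card := by
  rw [Finset.card_filter, Fintype.sum_prod_type, Finset.sum_filter]
  refine Finset.sum_congr rfl (fun a _ => ?_)
  by_cases hQ : Q a
  · simp only [hQ, true_and, if_true]
    rw [← Finset.card_filter]
    congr 1
    ext b
    simp
  · simp [hQ]

lemma choose_two {N m : ℕ} (hm : 2 ≤ m) (hN : 2 ≤ N) :
    (N - 2).choose (m - 2) * (N * (N - 1)) = N.choose m * (m * (m - 1)) := by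
  obtain ⟨N, rfl⟩ := Nat.exists_eq_add_of_le' hN
  obtain ⟨m, rfl⟩ := Nat.exists_eq_add_of_le' hm
  have h1 := Nat.add_one_mul_choose_eq N m
  have h2 := Nat.add_one_mul_choose_eq (N + 1) (m + 1)
  simp only [Nat.add_sub_cancel]
  have e1 : N + 2 - 1 = N + 1 := by omega
  have e2 : m + 2 - 1 = m + 1 := by omega
  rw [e1, e2]
  calc N.choose m * ((N + 2) * (N + 1)) = (N + 2) * ((N + 1) * N.choose m) := by ring
    _ = ((N + 1 + 1) * (N + 1).choose (m + 1)) * (m + 1) := by rw [h1]; ring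
    _ = _ := by rw [h2]; ring

open Classical in
lemma bad_E {ω : Cfg n d} (h : IsCfg ω) (hn : 4 ≤ n) (hd : 1 ≤ d) (m : ℕ) :
    ((((Tr ω).powersetCard m).filter (fun E => ¬ GoodE ω E)).card : ℝ) ≤
      8 * (m : ℝ) ^ 2 / n * ((n * d / 2).choose m : ℕ) := by
  have hT := Tr_card h
  have hN : (Tr ω).card = n * d / 2 := by omega
  rw [← hN]
  set N := (Tr ω).card with hNd
  have hN2 : 2 ≤ N := by
    have : 4 * 1 ≤ n * d := Nat.mul_le_mul hn hd
    omega
  set rep : Fin n × Fin d → Fin n × Fin d := fun p => if p ∈ Tr ω then p else tau ω p with hrep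
  have hrep2 : ∀ p, (rep p).2 = p.2 := by
    intro p; simp only [hrep]; split_ifs <;> rfl
  have hrepT : ∀ p, rep p ∈ Tr ω := by
    intro p
    simp only [hrep]
    split_ifs with hp
    · exact hp
    · rw [mem_Tr] at hp ⊢
      simp only [tau, (h p.2 p.1).1]
      exact lt_of_le_of_ne (not_lt.1 hp) (h p.2 p.1).2
  have hrepE : ∀ E ⊆ Tr ω, ∀ p ∈ DE ω E, rep p ∈ E := by
    intro E hE p hp
    rcases (mem_DE h).1 hp with h1 | h1
    · simp only [hrep, hE h1, if_true]; exact h1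
    · have : p ∉ Tr ω := by
        have h2 := mem_Tr.1 (hE h1)
        simp only [tau, (h p.2 p.1).1] at h2
        rw [mem_Tr]
        exact not_lt.2 h2.le
      simp only [hrep, this, if_false]; exact h1
  have hsub : ((Tr ω).powersetCard m).filter (fun E => ¬ GoodE ω E) ⊆
      (Finset.univ.filter (fun t : Fin n × Fin d × Fin d => t.2.1 ≠ t.2.2)).biUnion
        (fun t => ((Tr ω).powersetCard m).filter
          (fun E => {rep (t.1, t.2.1), rep (t.1, t.2.2)} ⊆ E)) := by
    intro E hE
    rw [Finset.mem_filter, Finset.mem_powersetCard] at hE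
    obtain ⟨⟨hE1, hE2⟩, hE3⟩ := hE
    unfold GoodE at hE3
    push Not at hE3
    obtain ⟨x, i, j, hi, hj, hij⟩ := hE3
    rw [Finset.mem_biUnion]
    refine ⟨(x, i, j), by simpa using hij, ?_⟩
    rw [Finset.mem_filter, Finset.mem_powersetCard]
    refine ⟨⟨hE1, hE2⟩, ?_⟩
    intro p hp
    rw [Finset.mem_insert, Finset.mem_singleton] at hp
    rcases hp with rfl | rfl
    · exact hrepE E hE1 _ hi
    · exact hrepE E hE1 _ hj
  by_cases hm : 2 ≤ m
  swap
  · have : ((Tr ω).powersetCard m).filter (fun E => ¬ GoodE ω E) = ∅ := by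
      rw [Finset.eq_empty_iff_forall_notMem]
      intro E hE
      have hE' := hsub hE
      rw [Finset.mem_biUnion] at hE'
      obtain ⟨t, ht, hE'⟩ := hE'
      rw [Finset.mem_filter, Finset.mem_powersetCard] at hE'
      have hc := Finset.card_le_card hE'.2
      rw [Finset.card_pair, hE'.1.2] at hc
      · omega
      · intro e
        have := congrArg Prod.snd e
        rw [hrep2, hrep2] at this
        exact (Finset.mem_filter.1 ht).2 this
    rw [this]
    simp only [Finset.card_empty, Nat.cast_zero]
    positivity
  have hcard : (((Tr ω).powersetCard m).filter (fun E => ¬ GoodE ω E)).card ≤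
      n * d ^ 2 * (N - 2).choose (m - 2) := by
    refine (Finset.card_le_card hsub).trans (Finset.card_biUnion_le.trans ?_)
    calc _ ≤ ∑ t ∈ (Finset.univ.filter (fun t : Fin n × Fin d × Fin d => t.2.1 ≠ t.2.2)),
          (N - 2).choose (m - 2) := by
          refine Finset.sum_le_sum (fun t ht => ?_)
          have hp : ({rep (t.1, t.2.1), rep (t.1, t.2.2)} : Finset (Fin n × Fin d)).card = 2 := by
            rw [Finset.card_pair]
            intro e
            have := congrArg Prod.snd e
            rw [hrep2, hrep2] at this
            exact (Finset.mem_filter.1 ht).2 this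
          rw [Finset.card_filter_powersetCard_subset, hp]
          · intro p hp
            rw [Finset.mem_insert, Finset.mem_singleton] at hp
            rcases hp with rfl | rfl <;> exact hrepT _
          · rw [hp]; exact hm
      _ ≤ ∑ t : Fin n × Fin d × Fin d, (N - 2).choose (m - 2) :=
          Finset.sum_le_sum_of_subset (Finset.filter_subset _ _)
      _ = _ := by
          rw [Finset.sum_const, Finset.card_univ]
          simp only [Fintype.card_prod, Fintype.card_fin, smul_eq_mul]
          ring
  have hch := choose_two hm hN2
  have hR : (((Tr ω).powersetCard m).filter (fun E => ¬ GoodE ω E)).card * n ≤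
      8 * m ^ 2 * N.choose m := by
    set C := N.choose m
    set c2 := (N - 2).choose (m - 2)
    set b := (((Tr ω).powersetCard m).filter (fun E => ¬ GoodE ω E)).card
    have e1 : N ≤ 2 * (N - 1) := by omega
    have e2 : m - 1 ≤ m := by omega
    have hpos : 0 < N * (N - 1) := Nat.mul_pos (by omega) (by omega)
    refine Nat.le_of_mul_le_mul_right ?_ hpos
    calc b * n * (N * (N - 1)) ≤ n * d ^ 2 * c2 * n * (N * (N - 1)) := by gcongr
      _ = (n * d) ^ 2 * (c2 * (N * (N - 1))) := by ring
      _ = (2 * N) ^ 2 * (C * (m * (m - 1))) := by rw [hch, hT]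
      _ = 4 * C * m * (m - 1) * (N * N) := by ring
      _ ≤ 4 * C * m * m * (N * (2 * (N - 1))) := by gcongr
      _ = 8 * m ^ 2 * C * (N * (N - 1)) := by ring
  have hn0 : (0 : ℝ) < n := by
    have : 0 < n := by omega
    exact_mod_cast this
  rw [div_mul_eq_mul_div, le_div_iff₀ hn0]
  exact_mod_cast hR

/-- weight of a vertex -/
def wt (ω : Cfg n d) (E : Finset (Fin n × Fin d)) (x : Fin n) : ℕ :=
  if ∃ i, (x, i) ∈ DE ω E then 1 else 0

lemma sum_wt (ω : Cfg n d) (E : Finset (Fin n × Fin d)) {lam : ℝ} (hl : 1 ≤ lam) :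
    ∑ x, lam ^ (wt ω E x) ≤ n + 2 * E.card * lam := by
  classical
  have h1 : ∀ x, lam ^ (wt ω E x) ≤ 1 + if x ∈ (DE ω E).image Prod.fst then lam else 0 := by
    intro x
    by_cases hx : ∃ i, (x, i) ∈ DE ω E
    · have : x ∈ (DE ω E).image Prod.fst := by
        obtain ⟨i, hi⟩ := hx
        exact Finset.mem_image_of_mem Prod.fst hi
      rw [if_pos this, wt, if_pos hx]
      linarith
    · have : x ∉ (DE ω E).image Prod.fst := by
        intro hh
        obtain ⟨⟨y, i⟩, hi, rfl⟩ := Finset.mem_image.1 hh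
        exact hx ⟨i, hi⟩
      rw [if_neg this, wt, if_neg hx]
      simp
  refine (Finset.sum_le_sum (fun x _ => h1 x)).trans ?_
  rw [Finset.sum_add_distrib]
  have h2 : ((DE ω E).image Prod.fst).card ≤ 2 * E.card :=
    Finset.card_image_le.trans DE_card
  have h3 : (((DE ω E).image Prod.fst).card : ℝ) ≤ 2 * E.card := by exact_mod_cast h2
  simp only [Finset.sum_const, Finset.card_univ, Fintype.card_fin, nsmul_eq_mul, mul_one,
    Finset.sum_ite_mem, Finset.univ_inter]
  gcongr

open Classical in
/-- pairs (configuration, good labelled edge set) -/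
noncomputable def PG (n d m : ℕ) : Finset (Cfg n d × Finset (Fin n × Fin d)) :=
  Finset.univ.filter (fun P => IsCfg P.1 ∧ P.2 ∈ (Tr P.1).powersetCard m ∧ GoodE P.1 P.2)

lemma mem_PG {m : ℕ} {P : Cfg n d × Finset (Fin n × Fin d)} :
    P ∈ PG n d m ↔ IsCfg P.1 ∧ (P.2 ⊆ Tr P.1 ∧ P.2.card = m) ∧ GoodE P.1 P.2 := by
  simp [PG, Finset.mem_powersetCard]

lemma DE_congr {ω ω' : Cfg n d} {E : Finset (Fin n × Fin d)}
    (h' : ω' ∈ cyl (DE ω E) ω) : DE ω' E = DE ω E := by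
  unfold DE
  congr 1
  refine Finset.image_congr ?_
  intro p hp
  have := (mem_cyl.1 h').2 p (Finset.mem_union_left _ hp)
  simp only [tau, this]

open Classical in
lemma fiber_bound {m s : ℕ} {u v : Fin n} {Q K lam : ℝ}
    (hPF : ∀ (ω : Cfg n d) E, IsCfg ω → E.card = m → GoodE ω E →
      PF (Fail (DE ω E) u v s) (DE ω E) ω (Q + K * lam ^ (wt ω E u + wt ω E v))) :
    (((PG n d m).filter (fun P => Fail (DE P.1 P.2) u v s P.1)).card : ℝ) ≤
      ∑ P ∈ PG n d m, (Q + K * lam ^ (wt P.1 P.2 u + wt P.1 P.2 v)) := by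
  rw [Finset.card_filter]
  push_cast
  refine sum_le_of_fiber (PG n d m) (fun P => (P.2, DE P.1 P.2,
    fun p : Fin n × Fin d => if p ∈ DE P.1 P.2 then P.1 p.2 p.1 else p.1)) _ _ ?_
  rintro ⟨ω, E⟩ ha
  obtain ⟨h1, ⟨h2, h3⟩, h4⟩ := mem_PG.1 ha
  simp only at h1 h2 h3 h4
  have hfib : (PG n d m).filter (fun b => (b.2, DE b.1 b.2,
      fun p : Fin n × Fin d => if p ∈ DE b.1 b.2 then b.1 p.2 p.1 else p.1) =
      (E, DE ω E, fun p : Fin n × Fin d => if p ∈ DE ω E then ω p.2 p.1 else p.1)) =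
      (cyl (DE ω E) ω).image (fun ω' => (ω', E)) := by
    ext ⟨ω', E'⟩
    rw [Finset.mem_filter, Finset.mem_image]
    constructor
    · rintro ⟨hb, e⟩
      simp only [Prod.mk.injEq] at e
      obtain ⟨rfl, e2, e3⟩ := e
      refine ⟨ω', mem_cyl.2 ⟨(mem_PG.1 hb).1, fun p hp => ?_⟩, rfl⟩
      have := congrFun e3 p
      simpa [e2, hp] using this
    · rintro ⟨ω'', hc, e⟩
      simp only [Prod.mk.injEq] at e
      obtain ⟨rfl, rfl⟩ := e
      have hDE := DE_congr hc
      have hc' := mem_cyl.1 hc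
      refine ⟨mem_PG.2 ⟨hc'.1, ⟨?_, h3⟩, ?_⟩, ?_⟩
      · intro p hp
        have e := hc'.2 p (Finset.mem_union_left _ hp)
        rw [mem_Tr]
        simp only [e]
        exact mem_Tr.1 (h2 hp)
      · unfold GoodE
        simp only [hDE]
        exact h4
      · simp only [hDE]
        congr 2
        funext p
        by_cases hp : p ∈ DE ω E
        · simp only [hp, if_true]; exact hc'.2 p hp
        · simp only [hp, if_false]
  have hinj : ∀ S : Set (Cfg n d), Set.InjOn (fun ω' : Cfg n d => (ω', E)) S := by
    intro S a _ b _ e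
    exact (Prod.mk.inj e).1
  rw [hfib, Finset.sum_image (hinj _), Finset.sum_image (hinj _)]
  have key := hPF ω E h1 h3 h4
  unfold PF at key
  have e1 : ∑ ω' ∈ cyl (DE ω E) ω, (if Fail (DE ω' E) u v s ω' then (1 : ℝ) else 0) =
      ((cyl (DE ω E) ω).filter (Fail (DE ω E) u v s)).card := by
    rw [Finset.card_filter]
    push_cast
    refine Finset.sum_congr rfl (fun ω' h' => ?_)
    rw [DE_congr h']
  have e2 : ∑ ω' ∈ cyl (DE ω E) ω, (Q + K * lam ^ (wt ω' E u + wt ω' E v)) =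
      (Q + K * lam ^ (wt ω E u + wt ω E v)) * (cyl (DE ω E) ω).card := by
    rw [mul_comm, ← nsmul_eq_mul, ← Finset.sum_const]
    refine Finset.sum_congr rfl (fun ω' h' => ?_)
    simp only [wt, DE_congr h']
  simp only
  rw [e1, e2]
  exact key

end RD

open Filter Asymptotics

namespace RD
variable {n d : ℕ}

lemma card_pairs_inst {α β : Type*} [Fintype α] [Fintype β] (Q : α → Prop) (S : α → Finset β)
    (R : α → β → Prop) [i1 : DecidablePred (fun P : α × β => Q P.1 ∧ P.2 ∈ S P.1 ∧ R P.1 P.2)]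
    [i2 : DecidablePred Q] [i3 : ∀ a, DecidablePred (R a)] :
    (Finset.univ.filter (fun P : α × β => Q P.1 ∧ P.2 ∈ S P.1 ∧ R P.1 P.2)).card =
      ∑ a ∈ Finset.univ.filter Q, ((S a).filter (R a)).card := by
  have h := card_pairs Q S R
  convert h

lemma Om_nonempty (hn : Even n) : (Om n d).Nonempty := by
  refine ⟨fun _ x => ⟨if x.1 % 2 = 0 then x.1 + 1 else x.1 - 1, ?_⟩, ?_⟩
  · have := x.2
    obtain ⟨k, hk⟩ := hn
    split_ifs <;> omega
  · rw [mem_Om]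
    intro i x
    refine ⟨?_, ?_⟩
    · apply Fin.ext
      simp only
      split_ifs <;> omega
    · intro e
      have := congrArg Fin.val e
      simp only at this
      split_ifs at this <;> omega

lemma card_Tr_pow {ω : Cfg n d} (h : IsCfg ω) (m : ℕ) :
    ((Tr ω).powersetCard m).card = (n * d / 2).choose m := by
  have hT := Tr_card h
  rw [Finset.card_powersetCard]
  congr 1
  omega

open Classical in
lemma PG_card (m : ℕ) : (PG n d m).card ≤ (Om n d).card * (n * d / 2).choose m := by
  unfold PG
  rw [card_pairs_inst IsCfg (fun ω => (Tr ω).powersetCard m) GoodE]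
  refine (Finset.sum_le_card_nsmul _ _ _ ?_)
  intro ω hω
  have h : IsCfg ω := (Finset.mem_filter.1 hω).2
  exact (Finset.card_filter_le _ _).trans (card_Tr_pow h m).le

open Classical in
lemma fail_count {m s : ℕ} {Q K lam : ℝ} (hK : 0 ≤ K) (hQ : 0 ≤ Q) (hlam : 1 ≤ lam)
    (hPF : ∀ u v, u ≠ v → ∀ (ω : Cfg n d) E, IsCfg ω → E.card = m → GoodE ω E →
      PF (Fail (DE ω E) u v s) (DE ω E) ω (Q + K * lam ^ (wt ω E u + wt ω E v))) :
    (((PG n d m).filter (fun P => ∃ u v, u ≠ v ∧ Fail (DE P.1 P.2) u v s P.1)).card : ℝ) ≤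
      ((n : ℝ) ^ 2 * Q + K * (n + 2 * m * lam) ^ 2) * ((Om n d).card * (n * d / 2).choose m : ℕ) := by
  have hsub : (PG n d m).filter (fun P => ∃ u v, u ≠ v ∧ Fail (DE P.1 P.2) u v s P.1) ⊆
      (Finset.univ.filter (fun t : Fin n × Fin n => t.1 ≠ t.2)).biUnion
        (fun t => (PG n d m).filter (fun P => Fail (DE P.1 P.2) t.1 t.2 s P.1)) := by
    intro P hP
    rw [Finset.mem_filter] at hP
    obtain ⟨h1, u, v, huv, hf⟩ := hP
    rw [Finset.mem_biUnion]
    exact ⟨(u, v), by simpa using huv, Finset.mem_filter.2 ⟨h1, hf⟩⟩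
  have h1 := (Finset.card_le_card hsub).trans Finset.card_biUnion_le
  have h1' : (((PG n d m).filter (fun P => ∃ u v, u ≠ v ∧ Fail (DE P.1 P.2) u v s P.1)).card : ℝ) ≤
      ∑ t ∈ Finset.univ.filter (fun t : Fin n × Fin n => t.1 ≠ t.2),
        (((PG n d m).filter (fun P => Fail (DE P.1 P.2) t.1 t.2 s P.1)).card : ℝ) := by
    exact_mod_cast h1
  have hlam0 : 0 < lam := by linarith
  refine h1'.trans ?_
  calc _ ≤ ∑ t ∈ Finset.univ.filter (fun t : Fin n × Fin n => t.1 ≠ t.2),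
        ∑ P ∈ PG n d m, (Q + K * lam ^ (wt P.1 P.2 t.1 + wt P.1 P.2 t.2)) := by
        refine Finset.sum_le_sum (fun t ht => ?_)
        exact fiber_bound (hPF t.1 t.2 (Finset.mem_filter.1 ht).2)
    _ ≤ ∑ t : Fin n × Fin n,
        ∑ P ∈ PG n d m, (Q + K * lam ^ (wt P.1 P.2 t.1 + wt P.1 P.2 t.2)) := by
        refine Finset.sum_le_sum_of_subset_of_nonneg (Finset.filter_subset _ _) ?_
        intro t _ _
        exact Finset.sum_nonneg (fun P _ => by positivity)
    _ = ∑ P ∈ PG n d m, ∑ t : Fin n × Fin n,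
        (Q + K * lam ^ (wt P.1 P.2 t.1 + wt P.1 P.2 t.2)) := Finset.sum_comm
    _ ≤ ∑ P ∈ PG n d m, ((n : ℝ) ^ 2 * Q + K * (n + 2 * m * lam) ^ 2) := by
        refine Finset.sum_le_sum (fun P hP => ?_)
        have hc := (mem_PG.1 hP).2.1.2
        have hs := sum_wt P.1 P.2 hlam
        rw [hc] at hs
        rw [Finset.sum_add_distrib, ← Finset.mul_sum]
        simp only [Finset.sum_const, Finset.card_univ, Fintype.card_prod, Fintype.card_fin,
          nsmul_eq_mul]
        have e : ∑ t : Fin n × Fin n, lam ^ (wt P.1 P.2 t.1 + wt P.1 P.2 t.2) =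
            (∑ x, lam ^ (wt P.1 P.2 x)) ^ 2 := by
          rw [Fintype.sum_prod_type, sq, Finset.sum_mul_sum]
          simp only [pow_add]
        rw [e]
        have h0 : (0 : ℝ) ≤ ∑ x, lam ^ (wt P.1 P.2 x) :=
          Finset.sum_nonneg (fun x _ => by positivity)
        push_cast
        rw [← sq]
        gcongr
    _ = ((n : ℝ) ^ 2 * Q + K * (n + 2 * m * lam) ^ 2) * (PG n d m).card := by
        rw [Finset.sum_const, nsmul_eq_mul, mul_comm]
    _ ≤ _ := by
        have := PG_card (n := n) (d := d) m
        gcongr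

open Classical in
lemma main_count {m s : ℕ} {Q K lam : ℝ} (hK : 0 ≤ K) (hQ : 0 ≤ Q) (hlam : 1 ≤ lam)
    (hd : 1 ≤ d) (hn : 2 + 4 * d ≤ n) (hne : Even n) (hm : m ≤ n * d / 2)
    (hPF : ∀ u v, u ≠ v → ∀ (ω : Cfg n d) E, IsCfg ω → E.card = m → GoodE ω E →
      PF (Fail (DE ω E) u v s) (DE ω E) ω (Q + K * lam ^ (wt ω E u + wt ω E v)))
    {A : (Fin d → SimpleGraph (Fin n)) → Finset (Sym2 (Fin n)) → Prop}
    (hA : ∀ M F, (((⨆ i, M i).deleteEdges (↑F : Set (Sym2 (Fin n)))).Connected ∧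
          ∀ u v : Fin n,
            ((⨆ i, M i).deleteEdges (↑F : Set (Sym2 (Fin n)))).dist u v ≤ s) → A M F) :
    0 ≤ 1 - delProb n d m A ∧ 1 - delProb n d m A ≤
      (2 * (1 + 2 * d ^ 2) ^ (4 * d ^ 2) : ℕ) *
        (8 * (m : ℝ) ^ 2 / n + ((n : ℝ) ^ 2 * Q + K * (n + 2 * m * lam) ^ 2)) := by
  set C := (n * d / 2).choose m with hC
  have hCpos : 0 < C := Nat.choose_pos hm
  set cd := 2 * (1 + 2 * d ^ 2) ^ (4 * d ^ 2) with hcd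
  have hOm := disj_prop (n := n) hd hn
  have hOmpos : 0 < (Om n d).card := Finset.card_pos.2 (Om_nonempty hne)
  have hAt : 0 < (At n d 0).card := by
    by_contra h
    have : (At n d 0).card = 0 := by omega
    rw [this] at hOm
    omega
  set X := Finset.univ.filter (fun P : Cfg n d × Finset (Fin n × Fin d) =>
        (IsCfg P.1 ∧ Disj P.1) ∧ P.2 ∈ (Tr P.1).powersetCard m) with hX
  have hXc : X.card = (At n d 0).card * C := by
    have h0 := card_pairs_inst (fun ω : Cfg n d => IsCfg ω ∧ Disj ω)
      (fun ω => (Tr ω).powersetCard m) (fun _ _ => True)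
    have h2 : ∀ ω ∈ Finset.univ.filter (fun ω : Cfg n d => IsCfg ω ∧ Disj ω),
        (((Tr ω).powersetCard m).filter (fun _ => True)).card = C := by
      intro ω hω
      rw [Finset.filter_true_of_mem (fun _ _ => trivial)]
      exact card_Tr_pow (Finset.mem_filter.1 hω).2.1 m
    rw [Finset.sum_const_nat h2] at h0
    have e : Finset.univ.filter (fun ω : Cfg n d => IsCfg ω ∧ Disj ω) = At n d 0 := by
      ext ω; rw [mem_At_zero]; simp
    have e2 : X = Finset.univ.filter (fun P : Cfg n d × Finset (Fin n × Fin d) =>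
        (IsCfg P.1 ∧ Disj P.1) ∧ P.2 ∈ (Tr P.1).powersetCard m ∧ True) := by
      ext P; simp [hX]
    rw [e2, h0]
    congr 2
  have htot := transfer (n := n) (d := d) m (fun _ _ => True)
  have hgood := transfer (n := n) (d := d) m A
  simp only [and_true] at htot
  have hdel : delProb n d m A = ((X.filter (fun P => A (Gr P.1) (P.2.image (ed P.1)))).card : ℝ) /
      X.card := by
    unfold delProb
    rw [← htot, ← hgood, hX, Finset.filter_filter]
    simp only [and_assoc]
  have hpart := Finset.card_filter_add_card_filter_not (s := X)
    (fun P => A (Gr P.1) (P.2.image (ed P.1)))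
  set g := (X.filter (fun P => A (Gr P.1) (P.2.image (ed P.1)))).card with hg
  set b := (X.filter (fun P => ¬ A (Gr P.1) (P.2.image (ed P.1)))).card with hb
  have hXpos : (0 : ℝ) < X.card := by
    rw [hXc]; exact_mod_cast Nat.mul_pos hAt hCpos
  have h1 : 1 - delProb n d m A = (b : ℝ) / X.card := by
    rw [hdel, eq_div_iff hXpos.ne', sub_mul, div_mul_cancel₀ _ hXpos.ne', ← hpart]
    push_cast
    ring
  rw [h1]
  refine ⟨by positivity, ?_⟩
  rw [div_le_iff₀ hXpos]
  set P1 := Finset.univ.filter (fun P : Cfg n d × Finset (Fin n × Fin d) =>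
    IsCfg P.1 ∧ P.2 ∈ (Tr P.1).powersetCard m ∧ ¬ GoodE P.1 P.2) with hP1
  have hP1c : (P1.card : ℝ) ≤ 8 * (m : ℝ) ^ 2 / n * ((Om n d).card * C : ℕ) := by
    rw [hP1, card_pairs_inst IsCfg (fun ω => (Tr ω).powersetCard m) (fun ω E => ¬ GoodE ω E)]
    push_cast
    have e : Finset.univ.filter (fun ω : Cfg n d => IsCfg ω) = Om n d := by
      ext ω; rw [mem_Om]; simp
    rw [e]
    calc _ ≤ ∑ ω ∈ Om n d, 8 * (m : ℝ) ^ 2 / n * C :=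
          Finset.sum_le_sum (fun ω hω => bad_E (mem_Om.1 hω) (by omega) hd m)
      _ = _ := by rw [Finset.sum_const, nsmul_eq_mul]; ring
  set P2 := (PG n d m).filter (fun P => ∃ u v, u ≠ v ∧ Fail (DE P.1 P.2) u v s P.1) with hP2
  have hP2c := fail_count hK hQ hlam hPF
  rw [← hP2, ← hC] at hP2c
  have hsub : X.filter (fun P => ¬ A (Gr P.1) (P.2.image (ed P.1))) ⊆ P1 ∪ P2 := by
    rintro ⟨ω, E⟩ h
    simp only [hX, Finset.mem_filter, Finset.mem_univ, true_and, Finset.mem_powersetCard] at h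
    obtain ⟨⟨⟨a1, a2⟩, a3, a4⟩, a5⟩ := h
    rw [Finset.mem_union]
    by_cases hG : GoodE ω E
    · right
      rw [hP2, Finset.mem_filter, mem_PG]
      refine ⟨⟨a1, ⟨a3, a4⟩, hG⟩, ?_⟩
      by_contra hcon
      push Not at hcon
      exact a5 (hA _ _ (good_event (by omega) a1 a2 a3 hcon))
    · left
      simp only [hP1, Finset.mem_filter, Finset.mem_univ, true_and, Finset.mem_powersetCard]
      exact ⟨a1, ⟨a3, a4⟩, hG⟩
  have hb1 : (b : ℝ) ≤ P1.card + P2.card := by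
    exact_mod_cast (Finset.card_le_card hsub).trans (Finset.card_union_le _ _)
  have hOmC : (((Om n d).card * C : ℕ) : ℝ) ≤ cd * X.card := by
    rw [hXc]
    have : (Om n d).card * C ≤ cd * ((At n d 0).card * C) := by
      rw [← mul_assoc]
      gcongr
    exact_mod_cast this
  have hlam0 : 0 < lam := by linarith
  have hR : 0 ≤ 8 * (m : ℝ) ^ 2 / n + ((n : ℝ) ^ 2 * Q + K * (n + 2 * m * lam) ^ 2) := by
    positivity
  calc (b : ℝ) ≤ (8 * (m : ℝ) ^ 2 / n + ((n : ℝ) ^ 2 * Q + K * (n + 2 * m * lam) ^ 2)) *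
        ((Om n d).card * C : ℕ) := by
        rw [add_mul]
        linarith
    _ ≤ (8 * (m : ℝ) ^ 2 / n + ((n : ℝ) ^ 2 * Q + K * (n + 2 * m * lam) ^ 2)) *
        (cd * X.card) := by gcongr
    _ = _ := by ring

end RD

open Filter Asymptotics

namespace RD
variable {n d : ℕ}

lemma GG_le (hd : 3 ≤ d) (j : ℕ) : GG d j + 2 ≤ 2 * (d - 1) ^ j := by
  obtain ⟨e, rfl⟩ : ∃ e, d = e + 3 := ⟨d - 3, by omega⟩
  induction j with
  | zero => simp [GG]
  | succ j ih =>
    simp only [GG, pow_succ]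
    have e1 : e + 3 - 1 = e + 2 := by omega
    rw [e1] at ih ⊢
    nlinarith

lemma one_add_pow_le_exp {x W : ℝ} (hx : 0 ≤ 1 + x) (k : ℕ) (h : k * x ≤ W) :
    (1 + x) ^ k ≤ Real.exp W := by
  calc (1 + x) ^ k ≤ (Real.exp x) ^ k := by
        gcongr
        linarith [Real.add_one_le_exp x]
    _ = Real.exp (k * x) := by rw [Real.exp_nat_mul]
    _ ≤ _ := Real.exp_le_exp.2 h

lemma q_bound {sU sV : ℕ} {L : ℝ} (hn : 0 < n) (hV : (sV : ℝ) ≤ 2 * n)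
    (h : 24 * n * L ≤ sU * sV) :
    (1 - (sV : ℝ) / (2 * n)) ^ (sU / 4) ≤ Real.exp (1 - 3 * L) := by
  have hn' : (0 : ℝ) < n := by exact_mod_cast hn
  have h1 : (sV : ℝ) / (2 * n) ≤ 1 := by rw [div_le_one (by positivity)]; exact hV
  rw [sub_eq_add_neg]
  apply one_add_pow_le_exp (by linarith)
  have hfl : (sU : ℝ) / 4 - 1 ≤ ((sU / 4 : ℕ) : ℝ) := by
    have : sU ≤ 4 * (sU / 4) + 4 := by omega
    have : (sU : ℝ) ≤ 4 * ((sU / 4 : ℕ) : ℝ) + 4 := by exact_mod_cast this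
    linarith
  have h0 : 0 ≤ (sV : ℝ) / (2 * n) := by positivity
  have h2 := mul_le_mul_of_nonneg_right hfl h0
  have h3 : 3 * L ≤ (sU : ℝ) / 4 * ((sV : ℝ) / (2 * n)) := by
    have e : (sU : ℝ) / 4 * ((sV : ℝ) / (2 * n)) = (sU * sV) / (8 * n) := by field_simp; ring
    rw [e, le_div_iff₀ (by positivity)]
    linarith
  linarith

lemma half_pow (k : ℕ) : ((1 : ℝ) / 2) ^ k = Real.exp (-(k * Real.log 2)) := by
  rw [Real.exp_neg, Real.exp_nat_mul, Real.exp_log (by norm_num)]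
  simp

set_option maxHeartbeats 1600000 in
lemma core {m s J J2 J3 : ℕ} {L z C : ℝ} (hd : 3 ≤ d)
    (hs : J + 1 + J2 + 1 + (J + 1 + J3) ≤ s)
    (hn : 1 ≤ n) (hL : 1 ≤ L) (hm : (m : ℝ) ≤ L ^ 2)
    (hy1 : (n : ℝ) ^ (1 / 11 : ℝ) ≤ (((d - 1) ^ J : ℕ) : ℝ))
    (hy2 : (((d - 1) ^ J : ℕ) : ℝ) ≤ (n : ℝ) ^ (1 / 9 : ℝ))
    (hz2 : (((d - 1) ^ J * (d - 1) ^ J2 : ℕ) : ℝ) ≤ z)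
    (hz3 : (((d - 1) ^ J * (d - 1) ^ J3 : ℕ) : ℝ) ≤ z)
    (hzC : z ^ 2 ≤ C * n * L) (hzn : z ≤ (n : ℝ) ^ (5 / 9 : ℝ))
    (hprod : 48 * (n : ℝ) * L ≤ (((d - 1) ^ J * (d - 1) ^ J2 : ℕ) : ℝ) *
      (((d - 1) ^ J * (d - 1) ^ J3 : ℕ) : ℝ))
    (E3 : 2 + 2 * L ^ 2 + 4 * d * (n : ℝ) ^ (1 / 9 : ℝ) ≤ (n : ℝ) ^ (2 / 17 : ℝ))
    (E4 : 8 * d * ((n : ℝ) ^ (1 / 9 : ℝ) * (n : ℝ) ^ (2 / 17 : ℝ)) ≤ (n : ℝ) ^ (1 / 4 : ℝ))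
    (E6 : 2 * ((n : ℝ) ^ (2 / 17 : ℝ) + 4 * d * (n : ℝ) ^ (5 / 9 : ℝ) + 1) ≤ n)
    (E7 : ((n : ℝ) ^ (2 / 17 : ℝ)) ^ 2 ≤ n)
    (E8 : 4 + 64 * d ^ 2 * C * L + 3 * L ≤ Real.log 2 / 4 * (n : ℝ) ^ (1 / 11 : ℝ)) :
    ∀ u v, u ≠ v → ∀ (ω : Cfg n d) E, IsCfg ω → E.card = m → GoodE ω E →
      PF (Fail (DE ω E) u v s) (DE ω E) ω ((Real.exp (1 - 3 * L) + Real.exp (-(3 * L))) +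
        (Real.exp 1 * (((n : ℝ) ^ (3 / 4 : ℝ)) ^ 3)⁻¹) *
          ((n : ℝ) ^ (3 / 4 : ℝ)) ^ (wt ω E u + wt ω E v)) := by
  intro u v huv ω E hω hE hG
  set y := (d - 1) ^ J with hy
  set T := d * (1 + GG d J) with hT
  set T2 := d * y * GG d J2 + d * y * GG d J3 with hT2
  set x1 := 2 + 2 * m + 2 * T with hx1
  set x2 := x1 + d * y * GG d J2 + d * y * GG d J3 with hx2
  have hx2' : x2 = x1 + T2 := by rw [hx2, hT2]; ring
  set lam := (n : ℝ) ^ (3 / 4 : ℝ) with hlam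
  have hnR : (1 : ℝ) ≤ n := by exact_mod_cast hn
  have hn0 : (0 : ℝ) < n := by linarith
  have hlam1 : 1 ≤ lam := Real.one_le_rpow hnR (by norm_num)
  have hdR : (3 : ℝ) ≤ d := by exact_mod_cast hd
  have hTy : (T : ℝ) ≤ 2 * d * y := by
    have h := GG_le hd J
    have : T ≤ 2 * d * y := by
      rw [hT]
      have : 1 + GG d J ≤ 2 * y := by omega
      nlinarith
    exact_mod_cast this
  have hT2z : (T2 : ℝ) ≤ 4 * d * z := by
    have h2 := GG_le hd J2
    have h3 := GG_le hd J3
    have h2' : d * y * GG d J2 ≤ d * 2 * (y * (d - 1) ^ J2) := by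
      calc d * y * GG d J2 ≤ d * y * (2 * (d - 1) ^ J2) := Nat.mul_le_mul_left _ (by omega)
        _ = _ := by ring
    have h3' : d * y * GG d J3 ≤ d * 2 * (y * (d - 1) ^ J3) := by
      calc d * y * GG d J3 ≤ d * y * (2 * (d - 1) ^ J3) := Nat.mul_le_mul_left _ (by omega)
        _ = _ := by ring
    have h2R : ((d * y * GG d J2 : ℕ) : ℝ) ≤ d * 2 * ((y * (d - 1) ^ J2 : ℕ) : ℝ) := by
      exact_mod_cast h2'
    have h3R : ((d * y * GG d J3 : ℕ) : ℝ) ≤ d * 2 * ((y * (d - 1) ^ J3 : ℕ) : ℝ) := by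
      exact_mod_cast h3'
    have hd2 : (0 : ℝ) ≤ d * 2 := by positivity
    have h2z := mul_le_mul_of_nonneg_left hz2 hd2
    have h3z := mul_le_mul_of_nonneg_left hz3 hd2
    rw [hT2, Nat.cast_add]
    linarith
  have hx1R : (x1 : ℝ) ≤ (n : ℝ) ^ (2 / 17 : ℝ) := by
    have hdy : 4 * (d : ℝ) * y ≤ 4 * d * (n : ℝ) ^ (1 / 9 : ℝ) := by gcongr
    rw [hx1]
    push_cast
    linarith
  have hz0 : 0 ≤ z := le_trans (Nat.cast_nonneg _) hz2
  have hx2R : (x2 : ℝ) ≤ (n : ℝ) ^ (2 / 17 : ℝ) + 4 * d * z := by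
    rw [hx2']; push_cast; linarith
  have hdzn : 4 * (d : ℝ) * z ≤ 4 * d * (n : ℝ) ^ (5 / 9 : ℝ) := by gcongr
  have hx2n : 2 * ((x2 : ℝ) + 1) ≤ n := by linarith
  have hx12 : (x1 : ℝ) ≤ x2 := by rw [hx2']; push_cast; linarith [Nat.cast_nonneg (α := ℝ) T2]
  have hx1n : 2 * ((x1 : ℝ) + 1) ≤ n := by linarith
  have hpp : ∀ x : ℕ, 2 * ((x : ℝ) + 1) ≤ n → (x : ℝ) ≤ 2 * x / n * ((n : ℝ) - x - 1) := by
    intro x hx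
    have : 2 * (x : ℝ) / n * ((n : ℝ) - x - 1) = x * (2 * ((n : ℝ) - x - 1)) / n := by ring
    rw [this, le_div_iff₀ hn0]
    apply mul_le_mul_of_nonneg_left _ (Nat.cast_nonneg _)
    linarith
  have hq : (1 - (((y - y / 4) * (d - 1) ^ J3 : ℕ) : ℝ) / (2 * n)) ^
      (((y - y / 4) * (d - 1) ^ J2) / 4) ≤ Real.exp (1 - 3 * L) := by
    have hyy : 3 * (y : ℝ) ≤ 4 * ((y - y / 4 : ℕ) : ℝ) := by
      have : 3 * y ≤ 4 * (y - y / 4) := by omega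
      exact_mod_cast this
    have hyy' : ((y - y / 4 : ℕ) : ℝ) ≤ y := by exact_mod_cast Nat.sub_le _ _
    apply q_bound (by omega)
    · have : (((y - y / 4) * (d - 1) ^ J3 : ℕ) : ℝ) ≤ ((y * (d - 1) ^ J3 : ℕ) : ℝ) := by
        exact_mod_cast Nat.mul_le_mul_right _ (Nat.sub_le _ _)
      have : (n : ℝ) ^ (5 / 9 : ℝ) ≤ n := by
        have hh : 0 ≤ (n : ℝ) ^ (2 / 17 : ℝ) := by positivity
        have hh2 : 0 ≤ (n : ℝ) ^ (5 / 9 : ℝ) := by positivity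
        have hh3 := mul_le_mul_of_nonneg_right hdR hh2
        linarith
      linarith
    · push_cast at hprod ⊢
      set A2 := ((d - 1 : ℕ) : ℝ) ^ J2
      set A3 := ((d - 1 : ℕ) : ℝ) ^ J3
      set w := ((y - y / 4 : ℕ) : ℝ)
      have hA2 : 0 ≤ A2 := by positivity
      have hA3 : 0 ≤ A3 := by positivity
      have hy0 : (0 : ℝ) ≤ y := Nat.cast_nonneg _
      have hww : 9 * ((y : ℝ) * y) ≤ 16 * (w * w) := by nlinarith
      have h := mul_le_mul_of_nonneg_right hww (mul_nonneg hA2 hA3)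
      have : 0 ≤ (n : ℝ) * L := by positivity
      linarith
  have key := pair_bound (x1 := x1) (x2 := x2) (B := y / 4) (f := 2 * m) hd huv hω
    (DE_closed (E := E) hω) hG hs
    (by rw [← hE]; exact DE_card) (le_of_eq rfl) (le_of_eq rfl)
    (p1 := 2 * x1 / n) (p2 := 2 * x2 / n) (lam := lam) (q := Real.exp (1 - 3 * L))
    (by positivity) (by positivity) hlam1 (hpp x1 hx1n) (hpp x2 hx2n) (Real.exp_nonneg _) hq
  refine key.mono ?_
  have ht2 : ((1 : ℝ) / 2) ^ (y / 4 + 1) * (1 + 2 * x2 / n) ^ T2 ≤ Real.exp (-(3 * L)) := by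
    have hW : (T2 : ℝ) * (2 * x2 / n) ≤ 4 + 64 * d ^ 2 * C * L := by
      have : (T2 : ℝ) * (2 * x2 / n) = 2 * (T2 * x2) / n := by ring
      rw [this, div_le_iff₀ hn0]
      have hT20 : (0 : ℝ) ≤ T2 := Nat.cast_nonneg _
      set X := (n : ℝ) ^ (2 / 17 : ℝ)
      have hX0 : 0 ≤ X := by positivity
      have hdz : 0 ≤ 4 * (d : ℝ) * z := by positivity
      have h1 : (T2 : ℝ) * x2 ≤ (4 * d * z) * (X + 4 * d * z) :=
        mul_le_mul hT2z hx2R (Nat.cast_nonneg _) hdz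
      have h2 : (4 * d * z) * (X + 4 * d * z) ≤ 2 * X ^ 2 + 2 * (4 * d * z) ^ 2 := by
        nlinarith [sq_nonneg (X - 4 * d * z), sq_nonneg X]
      have h3 : (4 * d * z) ^ 2 ≤ 16 * d ^ 2 * (C * n * L) := by
        rw [mul_pow]
        have : (4 * (d : ℝ)) ^ 2 = 16 * d ^ 2 := by ring
        rw [this]
        gcongr
      linarith
    have h1 := one_add_pow_le_exp (x := 2 * (x2 : ℝ) / n) (by positivity) T2 hW
    rw [half_pow]
    calc _ ≤ Real.exp (-(((y / 4 + 1 : ℕ) : ℝ) * Real.log 2)) *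
          Real.exp (4 + 64 * d ^ 2 * C * L) := by gcongr
      _ = Real.exp (-(((y / 4 + 1 : ℕ) : ℝ) * Real.log 2) + (4 + 64 * d ^ 2 * C * L)) := by
          exact (Real.exp_add _ _).symm
      _ ≤ _ := by
          apply Real.exp_le_exp.2
          have hl : 0 < Real.log 2 := Real.log_pos (by norm_num)
          have hB : (y : ℝ) ≤ 4 * ((y / 4 + 1 : ℕ) : ℝ) := by
            have : y ≤ 4 * (y / 4 + 1) := by omega
            exact_mod_cast this
          have h5 : Real.log 2 / 4 * (n : ℝ) ^ (1 / 11 : ℝ) ≤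
              ((y / 4 + 1 : ℕ) : ℝ) * Real.log 2 := by
            have : (n : ℝ) ^ (1 / 11 : ℝ) ≤ 4 * ((y / 4 + 1 : ℕ) : ℝ) := hy1.trans hB
            nlinarith
          linarith
  have ht1 : (1 + 2 * x1 / n * (lam - 1)) ^ (2 * T) ≤ Real.exp 1 := by
    have hp0 : 0 ≤ 2 * (x1 : ℝ) / n := by positivity
    have hp1 : 0 ≤ 2 * (x1 : ℝ) / n * (lam - 1) := mul_nonneg hp0 (by linarith)
    apply one_add_pow_le_exp (by linarith)
    have hln : lam * (n : ℝ) ^ (1 / 4 : ℝ) = n := by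
      rw [hlam, ← Real.rpow_add hn0]
      norm_num
    have hc0 : 0 < (n : ℝ) ^ (1 / 4 : ℝ) := by positivity
    calc ((2 * T : ℕ) : ℝ) * (2 * x1 / n * (lam - 1))
        ≤ (4 * d * (n : ℝ) ^ (1 / 9 : ℝ)) * (2 * (n : ℝ) ^ (2 / 17 : ℝ) / n * lam) := by
          apply mul_le_mul _ _ hp1 (by positivity)
          · have hdy : 4 * (d : ℝ) * y ≤ 4 * d * (n : ℝ) ^ (1 / 9 : ℝ) := by gcongr
            push_cast
            linarith
          · apply mul_le_mul _ (by linarith) (by linarith) (by positivity)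
            gcongr
      _ = (8 * d * ((n : ℝ) ^ (1 / 9 : ℝ) * (n : ℝ) ^ (2 / 17 : ℝ))) * (lam / n) := by ring
      _ ≤ (n : ℝ) ^ (1 / 4 : ℝ) * (lam / n) := by gcongr
      _ = 1 := by
          rw [mul_div_assoc', mul_comm, hln]
          exact div_self hn0.ne'
  have hl0 : 0 ≤ (lam ^ 3)⁻¹ := by positivity
  have ht1' : (lam ^ 3)⁻¹ * (1 + 2 * x1 / n * (lam - 1)) ^ (2 * T) ≤ Real.exp 1 * (lam ^ 3)⁻¹ := by
    rw [mul_comm]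
    gcongr
  unfold wt
  gcongr

end RD

open Filter Asymptotics

namespace RD
variable {n d : ℕ}

lemma ev_pow (k : ℕ) (c : ℝ) {α β : ℝ} (h : α < β) :
    ∀ᶠ n : ℕ in atTop, c * Real.log n ^ k * (n : ℝ) ^ α ≤ (n : ℝ) ^ β := by
  have h1 := isLittleO_log_rpow_rpow_atTop (k : ℝ) (sub_pos.2 h)
  have h2 := h1.bound (show (0 : ℝ) < (|c| + 1)⁻¹ by positivity)
  have h3 := tendsto_natCast_atTop_atTop (R := ℝ) |>.eventually h2
  filter_upwards [h3, eventually_ge_atTop 1] with n hn hn1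
  have hnR : (1 : ℝ) ≤ n := by exact_mod_cast hn1
  have hn0 : (0 : ℝ) < n := by linarith
  have hl : 0 ≤ Real.log n := Real.log_nonneg hnR
  rw [Real.rpow_natCast, Real.norm_of_nonneg (by positivity), Real.norm_of_nonneg (by positivity),
    inv_mul_eq_div, le_div_iff₀ (by positivity)] at hn
  have e : (n : ℝ) ^ β = (n : ℝ) ^ (β - α) * (n : ℝ) ^ α := by
    rw [← Real.rpow_add hn0]; congr 1; ring
  rw [e]
  have hp : 0 ≤ Real.log n ^ k := by positivity
  have hc : c * Real.log n ^ k ≤ (n : ℝ) ^ (β - α) := by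
    nlinarith [le_abs_self c]
  gcongr

lemma exist_params {s : ℕ} {L C : ℝ} (hd : 3 ≤ d) (hs : 10 ≤ s) (hn : 1 ≤ n) (hL : 1 ≤ L)
    (hlow : 48 * (n : ℝ) * L ≤ ((d - 1 : ℕ) : ℝ) ^ (s - 3))
    (hup : ((d - 1 : ℕ) : ℝ) ^ s ≤ C * n * L)
    (E1 : C * n * L ≤ (n : ℝ) ^ (10 / 9 : ℝ))
    (E2 : ((d - 1 : ℕ) : ℝ) ^ 20 * (n : ℝ) ^ (10 / 11 : ℝ) ≤ n) :
    ∃ J J2 J3 : ℕ, ∃ z : ℝ, J + 1 + J2 + 1 + (J + 1 + J3) ≤ s ∧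
    (n : ℝ) ^ (1 / 11 : ℝ) ≤ (((d - 1) ^ J : ℕ) : ℝ) ∧
    (((d - 1) ^ J : ℕ) : ℝ) ≤ (n : ℝ) ^ (1 / 9 : ℝ) ∧
    (((d - 1) ^ J * (d - 1) ^ J2 : ℕ) : ℝ) ≤ z ∧
    (((d - 1) ^ J * (d - 1) ^ J3 : ℕ) : ℝ) ≤ z ∧
    z ^ 2 ≤ C * n * L ∧ z ≤ (n : ℝ) ^ (5 / 9 : ℝ) ∧
    48 * (n : ℝ) * L ≤ (((d - 1) ^ J * (d - 1) ^ J2 : ℕ) : ℝ) *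
      (((d - 1) ^ J * (d - 1) ^ J3 : ℕ) : ℝ) := by
  have hnR : (1 : ℝ) ≤ n := by exact_mod_cast hn
  have hn0 : (0 : ℝ) < n := by linarith
  have ha1 : (1 : ℝ) ≤ ((d - 1 : ℕ) : ℝ) := by exact_mod_cast (by omega : 1 ≤ d - 1)
  push_cast
  set a := ((d - 1 : ℕ) : ℝ) with ha
  have ha0 : 0 < a := by linarith
  obtain ⟨J, hJ1, hJ2⟩ : ∃ J, 10 * (J + 1) ≤ s ∧ s < 10 * (J + 2) :=
    ⟨s / 10 - 1, by omega, by omega⟩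
  obtain ⟨J2, hJ3⟩ : ∃ J2, J + 1 + J2 = (s - 1) / 2 := ⟨(s - 1) / 2 - (J + 1), by omega⟩
  obtain ⟨J3, hJ4⟩ : ∃ J3, J + 1 + J3 = s - 1 - (s - 1) / 2 :=
    ⟨s - 1 - (s - 1) / 2 - (J + 1), by omega⟩
  have hzz : (a ^ (J + 1 + J3)) ^ 2 ≤ C * n * L := by
    rw [← pow_mul]
    exact (pow_le_pow_right₀ ha1 (by omega)).trans hup
  refine ⟨J, J2, J3, a ^ (J + 1 + J3), by omega, ?_, ?_, ?_, ?_, hzz, ?_, ?_⟩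
  · have e : ((n : ℝ) ^ (1 / 11 : ℝ)) ^ 10 = (n : ℝ) ^ (10 / 11 : ℝ) := by
      rw [← Real.rpow_natCast, ← Real.rpow_mul hn0.le]; norm_num
    refine (pow_le_pow_iff_left₀ (by positivity) (by positivity) (by norm_num : 10 ≠ 0)).1 ?_
    rw [e]
    have h1 : a ^ (s - 3) ≤ a ^ 20 * (a ^ J) ^ 10 := by
      rw [← pow_mul, ← pow_add]
      exact pow_le_pow_right₀ ha1 (by omega)
    have h2 : (n : ℝ) ≤ 48 * n * L := by nlinarith
    have h3 : a ^ 20 * (n : ℝ) ^ (10 / 11 : ℝ) ≤ a ^ 20 * (a ^ J) ^ 10 := by linarith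
    exact le_of_mul_le_mul_left h3 (by positivity)
  · have e : ((n : ℝ) ^ (1 / 9 : ℝ)) ^ 10 = (n : ℝ) ^ (10 / 9 : ℝ) := by
      rw [← Real.rpow_natCast, ← Real.rpow_mul hn0.le]; norm_num
    refine (pow_le_pow_iff_left₀ (by positivity) (by positivity) (by norm_num : 10 ≠ 0)).1 ?_
    rw [e, ← pow_mul]
    exact ((pow_le_pow_right₀ ha1 (by omega)).trans hup).trans E1
  · rw [← pow_add]; exact pow_le_pow_right₀ ha1 (by omega)
  · rw [← pow_add]; exact pow_le_pow_right₀ ha1 (by omega)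
  · have e : ((n : ℝ) ^ (5 / 9 : ℝ)) ^ 2 = (n : ℝ) ^ (10 / 9 : ℝ) := by
      rw [← Real.rpow_natCast, ← Real.rpow_mul hn0.le]; norm_num
    refine (pow_le_pow_iff_left₀ (by positivity) (by positivity) (by norm_num : 2 ≠ 0)).1 ?_
    rw [e]
    exact hzz.trans E1
  · refine hlow.trans ?_
    rw [← pow_add, ← pow_add, ← pow_add]
    exact pow_le_pow_right₀ ha1 (by omega)

lemma total_bound {m : ℕ} {L : ℝ} (hLe : L = Real.log n) (hn : 1 ≤ n) (hL : 1 ≤ L)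
    (hm : (m : ℝ) ≤ L ^ 2)
    (E9 : 2 * L ^ 2 ≤ (n : ℝ) ^ (1 / 4 : ℝ)) :
    (8 * (m : ℝ) ^ 2 / n + ((n : ℝ) ^ 2 * (Real.exp (1 - 3 * L) + Real.exp (-(3 * L))) +
      (Real.exp 1 * (((n : ℝ) ^ (3 / 4 : ℝ)) ^ 3)⁻¹) *
        (n + 2 * m * (n : ℝ) ^ (3 / 4 : ℝ)) ^ 2)) * L ^ 2 * (n : ℝ) ^ (1 / 4 : ℝ) ≤
      24 * L ^ 6 := by
  have hnR : (1 : ℝ) ≤ n := by exact_mod_cast hn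
  have hn0 : (0 : ℝ) < n := by linarith
  have hexp : Real.exp (-(3 * L)) = ((n : ℝ) ^ 3)⁻¹ := by
    rw [Real.exp_neg, hLe]
    congr 1
    have := Real.exp_nat_mul (Real.log n) 3
    rw [Real.exp_log hn0] at this
    exact_mod_cast this
  have hexp1 : Real.exp (1 - 3 * L) = Real.exp 1 * ((n : ℝ) ^ 3)⁻¹ := by
    rw [sub_eq_add_neg, Real.exp_add, hexp]
  have he : Real.exp 1 ≤ 3 := by linarith [Real.exp_one_lt_d9]
  set c := (n : ℝ) ^ (1 / 4 : ℝ) with hc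
  have hc1 : 1 ≤ c := Real.one_le_rpow hnR (by norm_num)
  have hc4 : (n : ℝ) = c ^ 4 := by
    rw [hc, ← Real.rpow_natCast, ← Real.rpow_mul hn0.le]; norm_num
  have hl : (n : ℝ) ^ (3 / 4 : ℝ) = c ^ 3 := by
    rw [hc, ← Real.rpow_natCast, ← Real.rpow_mul hn0.le]; norm_num
  rw [hexp1, hexp, hl, hc4]
  have hc0 : 0 < c := by linarith
  have hL4 : (m : ℝ) ^ 2 ≤ L ^ 4 := by
    calc (m : ℝ) ^ 2 ≤ (L ^ 2) ^ 2 := by gcongr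
      _ = L ^ 4 := by ring
  have hL14 : 1 ≤ L ^ 4 := one_le_pow₀ hL
  have hmc : c ^ 4 + 2 * m * c ^ 3 ≤ 2 * c ^ 4 := by
    have : 2 * (m : ℝ) ≤ c := by linarith
    have := mul_le_mul_of_nonneg_right this (by positivity : 0 ≤ c ^ 3)
    nlinarith
  have t1 : 8 * (m : ℝ) ^ 2 / c ^ 4 * c ≤ 8 * L ^ 4 := by
    rw [div_mul_eq_mul_div, div_le_iff₀ (by positivity)]
    have : c ≤ c ^ 4 := le_self_pow₀ hc1 (by norm_num)
    exact mul_le_mul (by linarith) this hc0.le (by positivity)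
  have t2 : (c ^ 4) ^ 2 * (Real.exp 1 * ((c ^ 4) ^ 3)⁻¹ + ((c ^ 4) ^ 3)⁻¹) * c ≤ 4 := by
    have : (c ^ 4) ^ 2 * (Real.exp 1 * ((c ^ 4) ^ 3)⁻¹ + ((c ^ 4) ^ 3)⁻¹) * c =
        (Real.exp 1 + 1) * (c ^ 3)⁻¹ := by
      field_simp
    rw [this]
    have h1 : (c ^ 3)⁻¹ ≤ 1 := inv_le_one_of_one_le₀ (one_le_pow₀ hc1)
    have h2 : 0 ≤ (c ^ 3)⁻¹ := by positivity
    nlinarith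
  have t3 : Real.exp 1 * ((c ^ 3) ^ 3)⁻¹ * (c ^ 4 + 2 * m * c ^ 3) ^ 2 * c ≤ 12 := by
    calc _ ≤ 3 * ((c ^ 3) ^ 3)⁻¹ * (2 * c ^ 4) ^ 2 * c := by gcongr
      _ = 12 := by field_simp; norm_num
  have hL2 : 0 ≤ L ^ 2 := by positivity
  calc _ = (8 * (m : ℝ) ^ 2 / c ^ 4 * c +
        (c ^ 4) ^ 2 * (Real.exp 1 * ((c ^ 4) ^ 3)⁻¹ + ((c ^ 4) ^ 3)⁻¹) * c +
        Real.exp 1 * ((c ^ 3) ^ 3)⁻¹ * (c ^ 4 + 2 * m * c ^ 3) ^ 2 * c) * L ^ 2 := by ring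
    _ ≤ (24 * L ^ 4) * L ^ 2 := by
        gcongr
        linarith
    _ = _ := by ring

end RD

/-- Fix `ε > 0`, `d ≥ 3`, let `s(n)` be the least integer with
`(d-1)^{s-3} ≥ (16+ε) d n log n` and let `0 ≤ m(n) ≤ (log n)²`.  Delete a uniformly
random set of `m(n)` edges from the `d`-regular graph underlying `G''(n,d)`.  Then with
probability `1 - o((log n)⁻²)` (as `n → ∞` through even integers) the resulting graph is
connected and has diameter at most `s(n)`. -/
theorem stmt10 (ε : ℝ) (hε : 0 < ε) (d : ℕ) (hd : 3 ≤ d) (s : ℕ → ℕ)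
    (hs : ∀ n : ℕ,
      IsLeast {a : ℕ | (16 + ε) * d * n * Real.log n ≤ ((d : ℝ) - 1) ^ (a - 3)} (s n))
    (m : ℕ → ℕ) (hm : ∀ n, (m n : ℝ) ≤ (Real.log n) ^ 2) :
    (fun n : ℕ => 1 - delProb n d (m n)
        (fun M F =>
          ((⨆ i, M i).deleteEdges (↑F : Set (Sym2 (Fin n)))).Connected ∧
          ∀ u v : Fin n,
            ((⨆ i, M i).deleteEdges (↑F : Set (Sym2 (Fin n)))).dist u v ≤ s n))
      =o[Filter.atTop ⊓ Filter.principal {n : ℕ | Even n}]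
      (fun n : ℕ => ((Real.log n) ^ 2)⁻¹) := by
  have hdR : (3 : ℝ) ≤ d := by exact_mod_cast hd
  have hacast : ((d - 1 : ℕ) : ℝ) = (d : ℝ) - 1 := by
    rw [Nat.cast_sub (by omega)]; simp
  have ha2 : (2 : ℝ) ≤ ((d - 1 : ℕ) : ℝ) := by rw [hacast]; linarith
  have hs' : ∀ n : ℕ,
      IsLeast {a : ℕ | (16 + ε) * d * n * Real.log n ≤ ((d - 1 : ℕ) : ℝ) ^ (a - 3)} (s n) := by
    intro n; rw [hacast]; exact hs n
  set a := ((d - 1 : ℕ) : ℝ) with ha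
  set C := a ^ 4 * ((16 + ε) * d) with hC
  set cd := ((2 * (1 + 2 * d ^ 2) ^ (4 * d ^ 2) : ℕ) : ℝ) with hcd
  have hcd0 : 0 ≤ cd := Nat.cast_nonneg _
  rw [isLittleO_iff]
  intro c hc
  rw [Filter.eventually_inf_principal]
  have hlog1 : ∀ᶠ n : ℕ in atTop, (1 : ℝ) ≤ Real.log n :=
    (Real.tendsto_log_atTop.comp tendsto_natCast_atTop_atTop).eventually_ge_atTop 1
  filter_upwards [hlog1, eventually_ge_atTop 1, eventually_ge_atTop (2 + 4 * d),
    RD.ev_pow 1 C (show (1 : ℝ) < 10 / 9 by norm_num),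
    RD.ev_pow 0 (a ^ 20) (show (10 / 11 : ℝ) < 1 by norm_num),
    RD.ev_pow 0 (a ^ 7) (show (0 : ℝ) < 1 by norm_num),
    RD.ev_pow 0 8 (show (0 : ℝ) < 2 / 17 by norm_num),
    RD.ev_pow 2 8 (show (0 : ℝ) < 2 / 17 by norm_num),
    RD.ev_pow 0 (8 * d) (show (1 / 9 : ℝ) < 2 / 17 by norm_num),
    RD.ev_pow 0 (8 * d) (show (1 / 9 + 2 / 17 : ℝ) < 1 / 4 by norm_num),
    RD.ev_pow 0 8 (show (2 / 17 : ℝ) < 1 by norm_num),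
    RD.ev_pow 0 (32 * d) (show (5 / 9 : ℝ) < 1 by norm_num),
    RD.ev_pow 0 8 (show (0 : ℝ) < 1 by norm_num),
    RD.ev_pow 1 ((7 + 64 * d ^ 2 * C) / (Real.log 2 / 4)) (show (0 : ℝ) < 1 / 11 by norm_num),
    RD.ev_pow 2 2 (show (0 : ℝ) < 1 / 4 by norm_num),
    RD.ev_pow 2 1 (show (0 : ℝ) < 1 by norm_num),
    RD.ev_pow 6 (24 * cd / c) (show (0 : ℝ) < 1 / 4 by norm_num)] with n
    hL hn hn4 E1 E2 E12 e8 e8L e8d e4 e6a e6b e6c E8 E9 E10 E13 hne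
  simp only [pow_zero, mul_one, Real.rpow_one, pow_one, Real.rpow_zero] at E1 E2 E12 e8 e8L e8d e4 e6a e6b e6c E8 E9 E10 E13
  have hnR : (1 : ℝ) ≤ n := by exact_mod_cast hn
  have hn0 : (0 : ℝ) < n := by linarith
  have hmn := hm n
  set L := Real.log n with hLdef
  have hL0 : 0 < L := by linarith
  have hC0 : 0 ≤ C := by positivity
  -- bounds on s
  have hup0 := (hs' n).1
  have hmin := (hs' n).2
  rw [Set.mem_ofPred_eq] at hup0
  have hNlow : 48 * (n : ℝ) * L ≤ (16 + ε) * d * n * L := by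
    have : (48 : ℝ) ≤ (16 + ε) * d := by nlinarith
    gcongr
  have hs10 : 10 ≤ s n := by
    by_contra hcon
    have h1 : a ^ (s n - 3) ≤ a ^ 7 := pow_le_pow_right₀ (by linarith) (by omega)
    nlinarith
  have hup1 : a ^ (s n) ≤ C * n * L := by
    have hnot : ¬ ((16 + ε) * d * n * L ≤ a ^ (s n - 1 - 3)) := by
      intro h
      have : s n ≤ s n - 1 := hmin (by rw [Set.mem_ofPred_eq]; exact h)
      omega
    push Not at hnot
    have e : a ^ (s n) = a ^ 4 * a ^ (s n - 1 - 3) := by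
      rw [← pow_add]; congr 1; omega
    rw [e]
    calc a ^ 4 * a ^ (s n - 1 - 3) ≤ a ^ 4 * ((16 + ε) * d * n * L) := by gcongr
      _ = C * n * L := by rw [hC]; ring
  have E1' : C * n * L ≤ (n : ℝ) ^ (10 / 9 : ℝ) := by
    calc C * n * L = C * L * n := by ring
      _ ≤ _ := E1
  obtain ⟨J, J2, J3, z, k1, k2, k3, k4, k5, k6, k7, k8⟩ :=
    RD.exist_params hd hs10 hn hL (hNlow.trans hup0) hup1 E1' E2
  have hl2 : 0 < Real.log 2 / 4 := by
    have := Real.log_pos (show (1 : ℝ) < 2 by norm_num)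
    positivity
  have F8 : 4 + 64 * d ^ 2 * C * L + 3 * L ≤ Real.log 2 / 4 * (n : ℝ) ^ (1 / 11 : ℝ) := by
    rw [div_mul_eq_mul_div, div_le_iff₀ hl2] at E8
    linarith
  have F4 : 8 * d * ((n : ℝ) ^ (1 / 9 : ℝ) * (n : ℝ) ^ (2 / 17 : ℝ)) ≤ (n : ℝ) ^ (1 / 4 : ℝ) := by
    rw [← Real.rpow_add hn0]; exact e4
  have F7 : ((n : ℝ) ^ (2 / 17 : ℝ)) ^ 2 ≤ n := by
    rw [← Real.rpow_natCast, ← Real.rpow_mul hn0.le]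
    calc (n : ℝ) ^ ((2 / 17 : ℝ) * (2 : ℕ)) ≤ (n : ℝ) ^ (1 : ℝ) :=
          Real.rpow_le_rpow_of_exponent_le hnR (by norm_num)
      _ = n := Real.rpow_one _
  have hPF := RD.core (L := L) (C := C) (m := m n) hd k1 hn hL hmn k2 k3 k4 k5 k6 k7 k8
    (by linarith) F4 (by linarith) F7 F8
  have hmd : m n ≤ n * d / 2 := by
    have : (m n : ℝ) ≤ n := by linarith
    have h1 : m n ≤ n := by exact_mod_cast this
    have h2 : n * 2 ≤ n * d := Nat.mul_le_mul_left _ (by omega)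
    omega
  have hmain := RD.main_count (s := s n) (by positivity) (by positivity)
    (Real.one_le_rpow hnR (by norm_num)) (by omega) hn4 hne hmd hPF
    (A := fun M F =>
          ((⨆ i, M i).deleteEdges (↑F : Set (Sym2 (Fin n)))).Connected ∧
          ∀ u v : Fin n,
            ((⨆ i, M i).deleteEdges (↑F : Set (Sym2 (Fin n)))).dist u v ≤ s n)
    (fun M F h => h)
  have htot := RD.total_bound (L := L) hLdef hn hL hmn E9
  rw [Real.norm_of_nonneg hmain.1, Real.norm_of_nonneg (by positivity)]
  refine hmain.2.trans ?_
  rw [← div_eq_mul_inv c, le_div_iff₀ (by positivity)]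
  have hc4 : 0 < (n : ℝ) ^ (1 / 4 : ℝ) := by positivity
  refine le_of_mul_le_mul_right ?_ hc4
  rw [div_mul_eq_mul_div, div_le_iff₀ hc] at E13
  have h := mul_le_mul_of_nonneg_left htot hcd0
  linarith
end

section
/- Let n be odd, let d be an even integer with 4 ≤ d ≤ (log n)², and let L be any graph on n-1 vertices that is the union of d pairwise edge-disjoint perfect matchings (in particular, L is d-regular). Sample d/2 edges uniformly at random, independently and with repetition, from the edge set of L. Then the probability that these edges do not form an induced d-matching of L is at most d⁴/n. Equivalently, the number of (d/2)-tuples (e_1,…,e_{d/2}) ∈ E(L)^{d/2} whose entries fail to form an induced d-matching is at most (d⁴/n)·|E(L)|^{d/2}. -/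
/-- The entries of the tuple `e` of (unordered) pairs form an induced matching of `L`:
they are edges of `L`, they are pairwise vertex-disjoint (in particular pairwise
distinct), and the subgraph of `L` induced by the vertices they span consists exactly of
these edges. -/
def FormsInducedMatching {V : Type*} {t : ℕ} (L : SimpleGraph V)
    (e : Fin t → Sym2 V) : Prop :=
  (∀ i, e i ∈ L.edgeSet) ∧
  (∀ i j, i ≠ j → ∀ x, x ∈ e i → x ∉ e j) ∧
  (∀ u v : V, (∃ i, u ∈ e i) → (∃ j, v ∈ e j) → L.Adj u v → ∃ i, e i = s(u, v))

open Classical in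
theorem deg_aux {N d : ℕ} (M : Fin d → SimpleGraph (Fin N)) (hM : IsPMTuple M)
    (v : Fin N) : (⨆ i, M i).degree v = d := by
  have h1 : (⨆ i, M i).neighborFinset v
      = Finset.univ.biUnion (fun i => (M i).neighborFinset v) := by
    ext w
    simp
  have h2 : ∀ i, ((M i).neighborFinset v).card = 1 := by
    intro i
    have := hM.1 i v
    rw [Nat.card_eq_fintype_card, SimpleGraph.card_neighborSet_eq_degree] at this
    exact this
  rw [SimpleGraph.degree, h1, Finset.card_biUnion]
  · simp [h2]
  · intro i _ j _ hij
    change Disjoint ((M i).neighborFinset v) ((M j).neighborFinset v)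
    rw [Finset.disjoint_left]
    intro w hw hw2
    rw [SimpleGraph.mem_neighborFinset] at hw hw2
    have := hM.2 i j hij
    rw [SimpleGraph.disjoint_left] at this
    exact this v w hw hw2

open Classical in
theorem conflict_aux {N d : ℕ} (L : SimpleGraph (Fin N)) (hdeg : ∀ v, L.degree v = d)
    (a : Sym2 (Fin N)) :
    (Finset.univ.filter (fun b : Sym2 (Fin N) => b ∈ L.edgeSet ∧
      ∃ x ∈ a, ∃ y ∈ b, x = y ∨ L.Adj x y)).card ≤ 2 * (d + 1) * d := by
  induction a using Sym2.ind with
  | _ p q =>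
  let W : Finset (Fin N) := insert p (L.neighborFinset p) ∪ insert q (L.neighborFinset q)
  have hW : W.card ≤ 2 * (d + 1) := by
    have h := Finset.card_union_le (insert p (L.neighborFinset p)) (insert q (L.neighborFinset q))
    have h1 := Finset.card_insert_le p (L.neighborFinset p)
    have h2 := Finset.card_insert_le q (L.neighborFinset q)
    rw [SimpleGraph.card_neighborFinset_eq_degree, hdeg] at h1 h2
    change W.card ≤ _ at h
    omega
  calc _ ≤ (W.biUnion (fun w => L.incidenceFinset w)).card := by
        apply Finset.card_le_card
        intro b hb
        simp only [Finset.mem_filter, Finset.mem_univ, true_and] at hb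
        obtain ⟨hbE, x, hx, y, hy, hxy⟩ := hb
        rw [Finset.mem_biUnion]
        refine ⟨y, ?_, ?_⟩
        · simp only [W, Finset.mem_union, Finset.mem_insert, SimpleGraph.mem_neighborFinset]
          rw [Sym2.mem_iff] at hx
          rcases hx with rfl | rfl <;> rcases hxy with rfl | h <;> simp_all
        · rw [SimpleGraph.mem_incidenceFinset]
          exact ⟨hbE, hy⟩
    _ ≤ W.card * d := by
        apply Finset.card_biUnion_le_card_mul
        intro w _
        rw [SimpleGraph.card_incidenceFinset_eq_degree, hdeg]
    _ ≤ _ := Nat.mul_le_mul_right _ hW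

open Classical in
theorem pair_aux {N d t : ℕ} (L : SimpleGraph (Fin N)) (hdeg : ∀ v, L.degree v = d)
    (i j : Fin t) (hij : i ≠ j) :
    (Finset.univ.filter (fun e : Fin t → Sym2 (Fin N) => (∀ k, e k ∈ L.edgeSet) ∧
      ∃ x ∈ e i, ∃ y ∈ e j, x = y ∨ L.Adj x y)).card
      ≤ (2 * (d + 1) * d) * L.edgeFinset.card ^ (t - 1) := by
  let T : Finset ({k : Fin t // k ≠ j} → Sym2 (Fin N)) :=
    Fintype.piFinset (fun _ => L.edgeFinset)
  have hT : T.card = L.edgeFinset.card ^ (t - 1) := by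
    simp only [T, Fintype.card_piFinset, Finset.prod_const, Finset.card_univ]
    congr 1
    simp [Fintype.card_subtype_compl]
  rw [← hT]
  apply Finset.card_le_mul_card_image_of_maps_to
    (f := fun e (k : {k : Fin t // k ≠ j}) => e k.1)
  · intro e he
    simp only [Finset.mem_filter, Finset.mem_univ, true_and, T, Fintype.mem_piFinset] at he ⊢
    intro k
    rw [SimpleGraph.mem_edgeFinset]
    exact he.1 _
  · intro g _
    refine le_trans ?_ (conflict_aux L hdeg (g ⟨i, hij⟩))
    apply Finset.card_le_card_of_injOn (fun e => e j)
    · intro e he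
      simp only [Finset.coe_filter, Finset.mem_filter, Finset.mem_univ, true_and,
        Set.mem_ofPred_eq] at he ⊢
      obtain ⟨⟨h1, h2⟩, rfl⟩ := he
      exact ⟨h1 j, h2⟩
    · intro e he e' he' hee
      simp only [Finset.coe_filter, Finset.mem_filter, Finset.mem_univ, true_and,
        Set.mem_ofPred_eq] at he he' hee
      funext k
      by_cases hk : k = j
      · rw [hk, hee]
      · exact congrFun (he.2.trans he'.2.symm) ⟨k, hk⟩

open Classical in
theorem total_aux {N d t : ℕ} (L : SimpleGraph (Fin N)) (hdeg : ∀ v, L.degree v = d) :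
    (Finset.univ.filter (fun e : Fin t → Sym2 (Fin N) =>
        (∀ i, e i ∈ L.edgeSet) ∧ ¬ FormsInducedMatching L e)).card
      ≤ (t * t) * ((2 * (d + 1) * d) * L.edgeFinset.card ^ (t - 1)) := by
  let P : Finset (Fin t × Fin t) := Finset.univ.filter (fun p => p.1 ≠ p.2)
  have hP : P.card ≤ t * t := by
    refine (Finset.card_filter_le _ _).trans ?_
    simp
  calc _ ≤ (P.biUnion (fun p => Finset.univ.filter (fun e : Fin t → Sym2 (Fin N) =>
          (∀ k, e k ∈ L.edgeSet) ∧ ∃ x ∈ e p.1, ∃ y ∈ e p.2, x = y ∨ L.Adj x y))).card := by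
        apply Finset.card_le_card
        intro e he
        simp only [Finset.mem_filter, Finset.mem_univ, true_and] at he
        obtain ⟨hE, hn⟩ := he
        simp only [Finset.mem_biUnion, Finset.mem_filter, Finset.mem_univ, true_and, P]
        by_contra hcon
        apply hn
        refine ⟨hE, ?_, ?_⟩
        · intro i j hij x hx hx'
          exact hcon ⟨(i, j), hij, hE, x, hx, x, hx', Or.inl rfl⟩
        · rintro u v ⟨i, hi⟩ ⟨j, hj⟩ huv
          by_cases hij : i = j
          · subst hij
            exact ⟨i, (Sym2.mem_and_mem_iff huv.ne).1 ⟨hi, hj⟩⟩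
          · exact absurd ⟨(i, j), hij, hE, u, hi, v, hj, Or.inr huv⟩ hcon
    _ ≤ P.card * ((2 * (d + 1) * d) * L.edgeFinset.card ^ (t - 1)) := by
        apply Finset.card_biUnion_le_card_mul
        intro p hp
        exact pair_aux L hdeg p.1 p.2 (by simpa [P] using hp)
    _ ≤ _ := Nat.mul_le_mul_right _ hP

open Classical in
/-- Let `n` be odd, `d` even with `4 ≤ d ≤ (log n)²`, and let `L` be a union of `d`
pairwise edge-disjoint perfect matchings on `n-1` vertices.  The number of `(d/2)`-tuples
of edges of `L` whose entries fail to form an induced `d`-matching of `L` is at most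
`(d⁴/n)·|E(L)|^{d/2}`. -/
theorem stmt12 (n d : ℕ) (hodd : Odd n) (hde : Even d) (hd4 : 4 ≤ d)
    (hdlog : (d : ℝ) ≤ (Real.log n) ^ 2)
    (L : SimpleGraph (Fin (n - 1)))
    (hL : ∃ M : Fin d → SimpleGraph (Fin (n - 1)), IsPMTuple M ∧ L = ⨆ i, M i) :
    ((Finset.univ.filter (fun e : Fin (d / 2) → Sym2 (Fin (n - 1)) =>
        (∀ i, e i ∈ L.edgeSet) ∧ ¬ FormsInducedMatching L e)).card : ℝ)
      ≤ ((d : ℝ) ^ 4 / n) * (Nat.card L.edgeSet : ℝ) ^ (d / 2) := by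
  obtain ⟨M, hM, hLM⟩ := hL
  have hdeg : ∀ v, L.degree v = d := by
    intro v
    have h := deg_aux M hM v
    rw [← hLM] at h
    convert h
  obtain ⟨k, rfl⟩ := hodd
  have hk : 1 ≤ k := by
    rcases Nat.eq_zero_or_pos k with rfl | h
    · exfalso
      norm_num at hdlog
      omega
    · exact h
  obtain ⟨t, rfl⟩ := hde
  have hm : L.edgeFinset.card = t * (2 * k) := by
    have h := L.sum_degrees_eq_twice_card_edges
    simp only [hdeg, Finset.sum_const, Finset.card_univ, Fintype.card_fin, smul_eq_mul] at h
    have h3 : 2 * k + 1 - 1 = 2 * k := by omega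
    have h4 := congrArg (fun z => z * (t + t)) h3
    have h5 := h4.symm.trans h
    nlinarith
  have hcard : Nat.card L.edgeSet = L.edgeFinset.card := by
    rw [Nat.card_eq_fintype_card, SimpleGraph.edgeFinset_card]
  have ht : (t + t) / 2 = t := by omega
  have htot := total_aux (t := (t + t) / 2) L hdeg
  have htot2 : ((Finset.univ.filter (fun e : Fin ((t + t) / 2) → Sym2 (Fin (2 * k + 1 - 1)) =>
        (∀ i, e i ∈ L.edgeSet) ∧ ¬ FormsInducedMatching L e)).card : ℝ)
      ≤ ((t * t) * ((2 * ((t + t) + 1) * (t + t)) * L.edgeFinset.card ^ (t - 1)) : ℕ) := by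
    have h := htot
    simp only [ht] at h
    exact_mod_cast htot.trans (by simp only [ht]; exact le_rfl)
  refine htot2.trans ?_
  rw [hcard, ht, hm]
  obtain ⟨s, rfl⟩ : ∃ s, t = s + 1 := ⟨t - 1, by omega⟩
  have hs : (1 : ℝ) ≤ s := by exact_mod_cast (by omega : 1 ≤ s)
  have hk' : (1 : ℝ) ≤ k := by exact_mod_cast hk
  simp only [Nat.add_sub_cancel]
  push_cast
  rw [pow_succ (((s : ℝ) + 1) * (2 * k)) s]
  generalize hX : (((s : ℝ) + 1) * (2 * k)) ^ s = X
  have hX0 : 0 ≤ X := by rw [← hX]; positivity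
  have hpos : (0 : ℝ) < 2 * k + 1 := by positivity
  rw [div_mul_eq_mul_div, le_div_iff₀ hpos]
  generalize hu : (s : ℝ) + 1 = u
  have hu2 : 2 ≤ u := by linarith
  have key : (2 * u + 1) * (2 * k + 1) ≤ 4 * u ^ 2 * (2 * k) := by
    have h1 : 2 * u + 1 ≤ 2 * u ^ 2 := by nlinarith
    have h2 : (2 * (k : ℝ) + 1) ≤ 2 * (2 * k) := by linarith
    calc _ ≤ (2 * u ^ 2) * (2 * (2 * (k : ℝ))) := by gcongr
      _ = _ := by ring
  have h := mul_le_mul_of_nonneg_left key (by positivity : 0 ≤ 4 * u ^ 3 * X)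
  nlinarith [h]
end
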